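/- (Key dissipation estimate.) For all positive constants μ, κ, R, c_v and all M, m > 0 and K ≥ 1 there exists a constant C > 0, depending only on μ, κ, R, c_v, M, m, K, such that: whenever (v,u,θ) is a classical solution of the one-dimensional compressible Navier–Stokes system on ℝ whose initial data are (M,m)-bounded and which is K-volume-bounded, then for every T > 0: sup_{0 ≤ t ≤ T} ∫_ℝ ( (θ(x,t) − 1)² + u(x,t)⁴ ) dx + ∫₀^T ∫_ℝ ( (1 + θ(x,t) + u(x,t)²) u_x(x,t)² + θ_x(x,t)² ) dx dt ≤ C. -/

import Mathlib

/-!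
The estimate comes from two balance laws. For a density `η(v, u, θ)` of the form
`V(v) + Θ(θ) + a₂ u² + a₄ u⁴ + u² h(θ)` the total `∫ η dx` changes in time by the space-time integral
of an explicit production, obtained from the equations and one integration by parts in space
(`NSE.Flow.balance`). The `H¹` and `H²` hypotheses enter only here, to make every term integrable;
the constants never see them.

The first density is the relative entropy `R (v - 1 - log v) + c_v (θ - 1 - log θ) + u²/2`. It yields
the basic energy estimate (`NSE.Flow.energy`): a bound `E` on `∫ u²`, `∫ (v-1)²`, `∫ (θ-1)²/(θ+1)` at
each time and on the space-time integrals of `u_x²/(θ+1)` and `θ_x²/(θ+1)²`. Since no lower bound on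
`θ` is available a priori, `log θ` is replaced by `(1+ε) log ((θ+ε)/(1+ε))`; the resulting error in
the production is `O(ε/(θ+ε))` and tends to `0` by dominated convergence.

The second density is `c_v g² + A u⁴ + 2 u² (θ-1)⁴/(θ+1)³` with `g = (θ-1)²/(θ+1)`, a function that
vanishes to second order at `θ = 1` and grows linearly. For large `θ` the mixed term produces the
dissipation `θ u_x²`, outweighing the viscous heating in the balance of `g²`; the term `g²` produces
`θ_x²`, and `A u⁴` with `A` large produces `u² u_x²` and absorbs the cross terms. Near `θ = 1` the
missing dissipation is already controlled by the first estimate. Pointwise (`NSE.Flow.prodn_phi`) the production is at most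
`-c ((1+θ+u²) u_x² + θ_x²) + C (u_x²/(θ+1) + θ_x²/(θ+1)² + g³ + u⁴ g + u⁴ (v-1)²)`.

The last three terms are treated at each time (`NSE.Flow.space_bound`). By Agmon's inequality
`sup u⁴ ≤ 4E ∫ u_x²`, and similarly `sup g² ≤ 9E ∫ θ_x²/(θ+1)`. The integrals on the right are
intermediate between the new dissipation and the one already controlled, for instance
`θ_x²/(θ+1) ≤ δ θ_x² + θ_x²/(4δ(θ+1)²)`, so a small `δ` lets half of the dissipation absorb them. What
is left is integrable in time with a bound that does not depend on `T`.
-/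

open MeasureTheory Filter Set

noncomputable section

/-- Partial derivative in the spatial variable. -/
def pdx (f : ℝ → ℝ → ℝ) (x t : ℝ) : ℝ := deriv (fun y => f y t) x

/-- Partial derivative in the time variable. -/
def pdt (f : ℝ → ℝ → ℝ) (x t : ℝ) : ℝ := deriv (fun s => f x s) t

/-- The `L²(ℝ)` norm, valued in `ℝ≥0∞`. -/
def L2 (f : ℝ → ℝ) : ENNReal := eLpNorm f 2 volume

/-- The `H¹(ℝ)` norm, valued in `ℝ≥0∞`. -/
def H1 (f : ℝ → ℝ) : ENNReal := L2 f + L2 (deriv f)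

/-- The `H²(ℝ)` norm, valued in `ℝ≥0∞`. -/
def H2 (f : ℝ → ℝ) : ENNReal := L2 f + L2 (deriv f) + L2 (deriv (deriv f))

/-- A classical solution of the 1-D compressible Navier–Stokes system in Lagrangian
coordinates on `ℝ`, together with the regularity and far-field conditions. -/
structure IsClassicalSolution (μ κ R cv : ℝ) (v u θ : ℝ → ℝ → ℝ) : Prop where
  v_pos : ∀ x t : ℝ, 0 ≤ t → 0 < v x t
  θ_pos : ∀ x t : ℝ, 0 ≤ t → 0 < θ x t
  smooth_x_v : ∀ t : ℝ, 0 ≤ t → ContDiff ℝ 2 (fun x => v x t)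
  smooth_x_u : ∀ t : ℝ, 0 ≤ t → ContDiff ℝ 2 (fun x => u x t)
  smooth_x_θ : ∀ t : ℝ, 0 ≤ t → ContDiff ℝ 2 (fun x => θ x t)
  smooth_t_v : ∀ x t : ℝ, 0 ≤ t → DifferentiableAt ℝ (fun s => v x s) t
  smooth_t_u : ∀ x t : ℝ, 0 ≤ t → DifferentiableAt ℝ (fun s => u x s) t
  smooth_t_θ : ∀ x t : ℝ, 0 ≤ t → DifferentiableAt ℝ (fun s => θ x s) t
  eq_mass : ∀ x t : ℝ, 0 ≤ t → pdt v x t = pdx u x t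
  eq_momentum : ∀ x t : ℝ, 0 ≤ t →
    pdt u x t + pdx (fun y s => R * θ y s / v y s) x t
      = μ * pdx (fun y s => pdx u y s / v y s) x t
  eq_energy : ∀ x t : ℝ, 0 ≤ t →
    cv * pdt θ x t + (R * θ x t / v x t) * pdx u x t
      = κ * pdx (fun y s => pdx θ y s / v y s) x t + μ * (pdx u x t) ^ 2 / v x t
  reg_H1 : ∀ T : ℝ, 0 ≤ T → ∃ B : ℝ, ∀ t ∈ Icc (0 : ℝ) T,
    H1 (fun x => v x t - 1) + H1 (fun x => u x t) + H1 (fun x => θ x t - 1)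
      ≤ ENNReal.ofReal B
  reg_H2 : ∀ T : ℝ, 0 < T →
    (∫⁻ t in Icc (0 : ℝ) T,
      (H2 (fun x => u x t) ^ 2 + H2 (fun x => θ x t - 1) ^ 2)) < ⊤
  farfield_v : ∀ t : ℝ, 0 ≤ t → Tendsto (fun x => v x t) (cocompact ℝ) (nhds 1)
  farfield_u : ∀ t : ℝ, 0 ≤ t → Tendsto (fun x => u x t) (cocompact ℝ) (nhds 0)
  farfield_θ : ∀ t : ℝ, 0 ≤ t → Tendsto (fun x => θ x t) (cocompact ℝ) (nhds 1)

/-- The initial data of `(v, u, θ)` are `(M, m)`-bounded. -/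
def InitBounded (M m : ℝ) (v u θ : ℝ → ℝ → ℝ) : Prop :=
  H1 (fun x => v x 0 - 1) + H1 (fun x => u x 0) + H1 (fun x => θ x 0 - 1)
      ≤ ENNReal.ofReal M
    ∧ (∀ x : ℝ, m ≤ v x 0) ∧ (∀ x : ℝ, m ≤ θ x 0)

/-- The solution is `K`-volume-bounded. -/
def VolBounded (K : ℝ) (v : ℝ → ℝ → ℝ) : Prop :=
  ∀ x t : ℝ, 0 ≤ t → K⁻¹ ≤ v x t ∧ v x t ≤ K

end

namespace NSE

/-! ### One-dimensional inequalities -/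

theorem eLpNorm_two_sq {α : Type*} [MeasurableSpace α] (ν : Measure α) (f : α → ℝ) :
    eLpNorm f 2 ν ^ 2 = ∫⁻ x, ‖f x‖ₑ ^ 2 ∂ν := by
  have h := eLpNorm_nnreal_pow_eq_lintegral (μ := ν) (f := f) (p := 2) (by norm_num)
  have e : ((2 : NNReal) : ℝ) = ((2 : ℕ) : ℝ) := by norm_num
  rw [e] at h
  simp only [ENNReal.rpow_natCast] at h
  exact_mod_cast h

theorem memLp_two_of_lintegral {α : Type*} [MeasurableSpace α] {ν : Measure α} {f : α → ℝ}
    (hm : AEStronglyMeasurable f ν) (h : ∫⁻ x, ‖f x‖ₑ ^ 2 ∂ν < ⊤) : MemLp f 2 ν := by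
  refine ⟨hm, ?_⟩
  rw [← eLpNorm_two_sq] at h
  by_contra hc
  rw [not_lt, top_le_iff] at hc
  rw [hc] at h
  simp at h

theorem lintegral_sq_eq {α : Type*} [MeasurableSpace α] {ν : Measure α} {f : α → ℝ}
    (hf : MemLp f 2 ν) : ∫⁻ x, ‖f x‖ₑ ^ 2 ∂ν = ENNReal.ofReal (∫ x, f x ^ 2 ∂ν) := by
  rw [ofReal_integral_eq_lintegral_ofReal hf.integrable_sq
    (Eventually.of_forall fun x => sq_nonneg _)]
  congr 1; ext x
  rw [← enorm_pow, Real.enorm_eq_ofReal (sq_nonneg _)]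

theorem integral_sq_le_of_eLpNorm {α : Type*} [MeasurableSpace α] {ν : Measure α} {f : α → ℝ}
    (hf : MemLp f 2 ν) {M : ℝ} (hM : 0 ≤ M) (h : eLpNorm f 2 ν ≤ ENNReal.ofReal M) :
    ∫ x, f x ^ 2 ∂ν ≤ M ^ 2 := by
  have h1 : eLpNorm f 2 ν ^ 2 ≤ ENNReal.ofReal M ^ 2 := by gcongr
  rw [eLpNorm_two_sq, lintegral_sq_eq hf, ← ENNReal.ofReal_pow hM] at h1
  exact (ENNReal.ofReal_le_ofReal_iff (by positivity)).1 h1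

theorem mul_int {α : Type*} [MeasurableSpace α] {ν : Measure α} {f g : α → ℝ}
    (hf : MemLp f 2 ν) (hg : MemLp g 2 ν) : Integrable (fun x => f x * g x) ν :=
  hf.integrable_mul hg

/-- The Cauchy–Schwarz inequality in squared form. -/
theorem cauchy_schwarz {α : Type*} [MeasurableSpace α] {ν : Measure α} {f g : α → ℝ}
    (hf : MemLp f 2 ν) (hg : MemLp g 2 ν) :
    (∫ x, |f x * g x| ∂ν) ^ 2 ≤ (∫ x, f x ^ 2 ∂ν) * ∫ x, g x ^ 2 ∂ν := by
  have h := integral_mul_norm_le_Lp_mul_Lq (μ := ν) (f := f) (g := g)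
    Real.HolderConjugate.two_two (by simpa using hf) (by simpa using hg)
  have e : ∀ k : α → ℝ, ∫ a, ‖k a‖ ^ (2 : ℝ) ∂ν = ∫ a, k a ^ 2 ∂ν := by
    intro k; congr 1; ext a
    rw [show (2 : ℝ) = ((2 : ℕ) : ℝ) by norm_num, Real.rpow_natCast, Real.norm_eq_abs, sq_abs]
  rw [e, e, ← Real.sqrt_eq_rpow, ← Real.sqrt_eq_rpow] at h
  have e2 : ∫ x, |f x * g x| ∂ν = ∫ a, ‖f a‖ * ‖g a‖ ∂ν := by
    congr 1; ext a; rw [abs_mul]; rfl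
  have h0 : 0 ≤ ∫ x, |f x * g x| ∂ν := integral_nonneg fun x => abs_nonneg _
  rw [← e2] at h
  have hf0 : 0 ≤ ∫ x, f x ^ 2 ∂ν := integral_nonneg fun x => sq_nonneg _
  have hg0 : 0 ≤ ∫ x, g x ^ 2 ∂ν := integral_nonneg fun x => sq_nonneg _
  calc _ ≤ (√(∫ x, f x ^ 2 ∂ν) * √(∫ x, g x ^ 2 ∂ν)) ^ 2 := by gcongr
    _ = _ := by rw [mul_pow, Real.sq_sqrt hf0, Real.sq_sqrt hg0]

/-- An integrable function with integrable derivative is bounded by the `L¹` norm of the latter. -/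
theorem abs_le_integral_deriv {F F' : ℝ → ℝ} (hd : ∀ x, HasDerivAt F (F' x) x)
    (hF : Integrable F) (hF' : Integrable F') (x : ℝ) : |F x| ≤ ∫ y, |F' y| := by
  have ht := tendsto_zero_of_hasDerivAt_of_integrableOn_Iic (a := x) (fun y _ => hd y)
    hF'.integrableOn hF.integrableOn
  have h := integral_Iic_of_hasDerivAt_of_tendsto (a := x) (hd x).continuousAt.continuousWithinAt
    (fun y _ => hd y) hF'.integrableOn ht
  rw [sub_zero] at h
  rw [← h]
  calc |∫ y in Iic x, F' y| ≤ ∫ y in Iic x, |F' y| := abs_integral_le_integral_abs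
    _ ≤ ∫ y, |F' y| := setIntegral_le_integral hF'.abs (Eventually.of_forall fun y => abs_nonneg _)

theorem sq_le_integral {f f' : ℝ → ℝ} (hd : ∀ x, HasDerivAt f (f' x) x)
    (hf : MemLp f 2 volume) (hf' : MemLp f' 2 volume) (x : ℝ) :
    f x ^ 2 ≤ 2 * ∫ y, |f y * f' y| := by
  have h := abs_le_integral_deriv (F := fun x => f x ^ 2) (F' := fun x => 2 * (f x * f' x))
    (fun x => ((hd x).fun_pow 2).congr_deriv (by simp [mul_assoc])) hf.integrable_sq
    ((mul_int hf hf').const_mul 2) x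
  rw [abs_of_nonneg (sq_nonneg _)] at h
  refine h.trans (le_of_eq ?_)
  rw [← integral_const_mul]
  congr 1; ext y
  rw [abs_mul, abs_of_pos (by norm_num : (0 : ℝ) < 2)]

/-- Agmon's inequality: `sup f⁴ ≤ 4 ‖f‖² ‖f'‖²`. -/
theorem agmon {f f' : ℝ → ℝ} (hd : ∀ x, HasDerivAt f (f' x) x)
    (hf : MemLp f 2 volume) (hf' : MemLp f' 2 volume) (x : ℝ) :
    (f x ^ 2) ^ 2 ≤ 4 * ((∫ y, f y ^ 2) * ∫ y, f' y ^ 2) := by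
  have h := sq_le_integral hd hf hf' x
  have h2 := cauchy_schwarz hf hf'
  have h3 : (f x ^ 2) ^ 2 ≤ (2 * ∫ y, |f y * f' y|) ^ 2 := by gcongr
  nlinarith

theorem sq_le_add {f f' : ℝ → ℝ} (hd : ∀ x, HasDerivAt f (f' x) x)
    (hf : MemLp f 2 volume) (hf' : MemLp f' 2 volume) (x : ℝ) :
    f x ^ 2 ≤ (∫ y, f y ^ 2) + ∫ y, f' y ^ 2 := by
  refine (sq_le_integral hd hf hf' x).trans ?_
  rw [← integral_const_mul, ← integral_add hf.integrable_sq hf'.integrable_sq]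
  refine integral_mono ((mul_int hf hf').abs.const_mul 2)
    (hf.integrable_sq.add hf'.integrable_sq) fun y => ?_
  show 2 * |f y * f' y| ≤ f y ^ 2 + f' y ^ 2
  rw [abs_mul, ← sq_abs (f y), ← sq_abs (f' y)]
  nlinarith [sq_nonneg (|f y| - |f' y|)]

/-- The Sobolev embedding in extended form, meaningful also when the `H¹` norm is infinite. -/
theorem enorm_sq_le {f f' : ℝ → ℝ} (hd : ∀ x, HasDerivAt f (f' x) x) (hm : Measurable f') (x : ℝ) :
    ‖f x‖ₑ ^ 2 ≤ (∫⁻ y, ‖f y‖ₑ ^ 2) + ∫⁻ y, ‖f' y‖ₑ ^ 2 := by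
  have hfm : AEStronglyMeasurable f volume :=
    (continuous_iff_continuousAt.2 fun x => (hd x).continuousAt).aestronglyMeasurable
  by_cases h1 : ∫⁻ y, ‖f y‖ₑ ^ 2 < ⊤
  swap
  · rw [not_lt, top_le_iff] at h1; simp [h1]
  by_cases h2 : ∫⁻ y, ‖f' y‖ₑ ^ 2 < ⊤
  swap
  · rw [not_lt, top_le_iff] at h2; simp [h2]
  have hf := memLp_two_of_lintegral hfm h1
  have hf' := memLp_two_of_lintegral hm.aestronglyMeasurable h2
  rw [lintegral_sq_eq hf, lintegral_sq_eq hf', ← ENNReal.ofReal_add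
    (integral_nonneg fun x => sq_nonneg _) (integral_nonneg fun x => sq_nonneg _),
    ← enorm_pow, Real.enorm_eq_ofReal (sq_nonneg _)]
  exact ENNReal.ofReal_le_ofReal (sq_le_add hd hf hf' x)

/-- Integration by parts on the line for functions whose derivatives are square integrable. -/
theorem ibp {f f' g g' : ℝ → ℝ} (hf : ∀ x, HasDerivAt f (f' x) x)
    (hg : ∀ x, HasDerivAt g (g' x) x) (mf : MemLp f 2 volume) (mf' : MemLp f' 2 volume)
    (mg : MemLp g 2 volume) (mg' : MemLp g' 2 volume) :
    ∫ x, f x * g' x = -∫ x, f' x * g x :=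
  integral_mul_deriv_eq_deriv_mul_of_integrable (fun x _ => hf x) (fun x _ => hg x)
    (mul_int mf mg') (mul_int mf' mg) (mul_int mf mg)

/-- A spatial derivative inherits measurability in the parameter. -/
theorem measurable_param_deriv {f f' : ℝ → ℝ → ℝ}
    (hd : ∀ x t, HasDerivAt (fun y => f y t) (f' x t) x) (hm : ∀ x, Measurable (f x)) (x : ℝ) :
    Measurable (f' x) := by
  refine measurable_of_tendsto_metrizable
    (f := fun (n : ℕ) t => ((1 : ℝ) / (n + 1))⁻¹ • (f (x + 1 / (n + 1)) t - f x t))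
    (fun n => by
      have h1 := hm (x + 1 / (n + 1))
      have h2 := hm x
      fun_prop) ?_
  rw [tendsto_pi_nhds]
  intro t
  have h := (hd x t).tendsto_slope_zero
  refine h.comp (f := fun n : ℕ => (1 : ℝ) / (n + 1)) ?_
  rw [tendsto_nhdsWithin_iff]
  refine ⟨tendsto_one_div_add_atTop_nhds_zero_nat, Eventually.of_forall fun n => ?_⟩
  have : (0 : ℝ) < 1 / (n + 1) := by positivity
  exact this.ne'

/-- The fundamental theorem of calculus in time, integrated in space. -/
theorem time_integral {f f' : ℝ → ℝ → ℝ} {a b : ℝ} (hab : a ≤ b)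
    (hc : ∀ x, Continuous (f x)) (hd : ∀ x, ∀ t ∈ Ioo a b, HasDerivAt (f x) (f' x t) t)
    (hi : Integrable (Function.uncurry f') (volume.prod (volume.restrict (Ioc a b))))
    (ha : Integrable fun x => f x a) (hb : Integrable fun x => f x b) :
    (∫ x, f x b) - ∫ x, f x a = ∫ t in Ioc a b, ∫ x, f' x t := by
  rw [← integral_integral_swap hi, ← integral_sub hb ha]
  refine integral_congr_ae ?_
  filter_upwards [hi.prod_right_ae] with x hx
  rw [← intervalIntegral.integral_of_le hab]
  refine (intervalIntegral.integral_eq_sub_of_hasDerivAt_of_le hab (hc x).continuousOn (hd x) ?_).symm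
  rw [intervalIntegrable_iff_integrableOn_Ioc_of_le hab]
  exact hx

/-! ### Solutions on a time slab and their space-time integrability -/

/-- Classical solutions on `ℝ × [0, T]`, with time clamped to `[0, T]` so that all spatial
information holds for every real `t`. The fields `vx`, `ux`, … are the spatial derivatives, the
time derivatives are given by the equations on `(0, T)`, and `B` bounds the squares of the
`L²` norms that enter the `H¹` norms. -/
structure Flow (μ κ R cv K T : ℝ) where
  v : ℝ → ℝ → ℝ
  u : ℝ → ℝ → ℝ
  θ : ℝ → ℝ → ℝ
  vx : ℝ → ℝ → ℝ
  ux : ℝ → ℝ → ℝ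
  θx : ℝ → ℝ → ℝ
  uxx : ℝ → ℝ → ℝ
  θxx : ℝ → ℝ → ℝ
  hμ : 0 < μ
  hκ : 0 < κ
  hR : 0 < R
  hcv : 0 < cv
  hK : 1 ≤ K
  hT : 0 < T
  v_lb : ∀ x t, K⁻¹ ≤ v x t
  v_ub : ∀ x t, v x t ≤ K
  θ_pos : ∀ x t, 0 < θ x t
  dv : ∀ x t, HasDerivAt (fun y => v y t) (vx x t) x
  du : ∀ x t, HasDerivAt (fun y => u y t) (ux x t) x
  dθ : ∀ x t, HasDerivAt (fun y => θ y t) (θx x t) x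
  dux : ∀ x t, HasDerivAt (fun y => ux y t) (uxx x t) x
  dθx : ∀ x t, HasDerivAt (fun y => θx y t) (θxx x t) x
  mv : Measurable fun p : ℝ × ℝ => v p.1 p.2
  mu : Measurable fun p : ℝ × ℝ => u p.1 p.2
  mθ : Measurable fun p : ℝ × ℝ => θ p.1 p.2
  mvx : Measurable fun p : ℝ × ℝ => vx p.1 p.2
  mux : Measurable fun p : ℝ × ℝ => ux p.1 p.2
  mθx : Measurable fun p : ℝ × ℝ => θx p.1 p.2
  muxx : Measurable fun p : ℝ × ℝ => uxx p.1 p.2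
  mθxx : Measurable fun p : ℝ × ℝ => θxx p.1 p.2
  cv_t : ∀ x, Continuous (v x)
  cu_t : ∀ x, Continuous (u x)
  cθ_t : ∀ x, Continuous (θ x)
  dv_t : ∀ x, ∀ t ∈ Ioo 0 T, HasDerivAt (v x) (ux x t) t
  du_t : ∀ x, ∀ t ∈ Ioo 0 T, HasDerivAt (u x)
    (μ * (uxx x t / v x t - ux x t * vx x t / v x t ^ 2)
      - R * (θx x t / v x t - θ x t * vx x t / v x t ^ 2)) t
  dθ_t : ∀ x, ∀ t ∈ Ioo 0 T, HasDerivAt (θ x)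
    ((κ * (θxx x t / v x t - θx x t * vx x t / v x t ^ 2)
      + μ * ux x t ^ 2 / v x t - R * θ x t / v x t * ux x t) / cv) t
  B : ℝ
  L2v : ∀ t, ∫⁻ x, ‖v x t - 1‖ₑ ^ 2 ≤ ENNReal.ofReal B
  L2u : ∀ t, ∫⁻ x, ‖u x t‖ₑ ^ 2 ≤ ENNReal.ofReal B
  L2θ : ∀ t, ∫⁻ x, ‖θ x t - 1‖ₑ ^ 2 ≤ ENNReal.ofReal B
  L2vx : ∀ t, ∫⁻ x, ‖vx x t‖ₑ ^ 2 ≤ ENNReal.ofReal B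
  L2ux : ∀ t, ∫⁻ x, ‖ux x t‖ₑ ^ 2 ≤ ENNReal.ofReal B
  L2θx : ∀ t, ∫⁻ x, ‖θx x t‖ₑ ^ 2 ≤ ENNReal.ofReal B
  L2uxx : ∫⁻ t in Ioc 0 T, ∫⁻ x, ‖uxx x t‖ₑ ^ 2 < ⊤
  L2θxx : ∫⁻ t in Ioc 0 T, ∫⁻ x, ‖θxx x t‖ₑ ^ 2 < ⊤

/-- Bounded measurable functions on space-time. -/
def BM (a : ℝ × ℝ → ℝ) : Prop := Measurable a ∧ ∃ c, ∀ p, |a p| ≤ c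

namespace BM

theorem const (c : ℝ) : BM fun _ => c := ⟨measurable_const, |c|, fun _ => le_rfl⟩

theorem add {a b : ℝ × ℝ → ℝ} (ha : BM a) (hb : BM b) : BM fun p => a p + b p := by
  obtain ⟨ma, c, hc⟩ := ha
  obtain ⟨mb, d, hd⟩ := hb
  exact ⟨ma.add mb, c + d, fun p => (abs_add_le _ _).trans (add_le_add (hc p) (hd p))⟩

theorem mul {a b : ℝ × ℝ → ℝ} (ha : BM a) (hb : BM b) : BM fun p => a p * b p := by
  obtain ⟨ma, c, hc⟩ := ha
  obtain ⟨mb, d, hd⟩ := hb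
  refine ⟨ma.mul mb, c * d, fun p => ?_⟩
  rw [abs_mul]
  exact mul_le_mul (hc p) (hd p) (abs_nonneg _) ((abs_nonneg _).trans (hc p))

theorem smul {a : ℝ × ℝ → ℝ} (c : ℝ) (ha : BM a) : BM fun p => c * a p := (const c).mul ha

theorem memLp {a f : ℝ × ℝ → ℝ} {ν : Measure (ℝ × ℝ)} (ha : BM a) (hf : MemLp f 2 ν) :
    MemLp (fun p => a p * f p) 2 ν := by
  obtain ⟨ma, c, hc⟩ := ha
  refine hf.of_le_mul (c := c) (ma.aestronglyMeasurable.mul hf.1) (Eventually.of_forall fun p => ?_)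
  rw [Real.norm_eq_abs, abs_mul]
  exact mul_le_mul_of_nonneg_right (hc p) (abs_nonneg _)

theorem integrable {a f : ℝ × ℝ → ℝ} {ν : Measure (ℝ × ℝ)} (ha : BM a) (hf : Integrable f ν) :
    Integrable (fun p => a p * f p) ν := by
  obtain ⟨ma, c, hc⟩ := ha
  exact hf.bdd_mul (c := c) ma.aestronglyMeasurable (Eventually.of_forall fun p => hc p)

end BM

/-- Lebesgue measure on `ℝ × (0, T]`. -/
noncomputable abbrev slab (T : ℝ) : Measure (ℝ × ℝ) := volume.prod (volume.restrict (Ioc 0 T))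

theorem memLp_slab {T : ℝ} {f : ℝ → ℝ → ℝ} (hm : Measurable fun p : ℝ × ℝ => f p.1 p.2)
    (h : ∫⁻ t in Ioc 0 T, ∫⁻ x, ‖f x t‖ₑ ^ 2 < ⊤) :
    MemLp (fun p : ℝ × ℝ => f p.1 p.2) 2 (slab T) := by
  refine memLp_two_of_lintegral hm.aestronglyMeasurable ?_
  rw [lintegral_prod_symm _ (hm.enorm.pow_const 2).aemeasurable]
  exact h

theorem lintegral_slab_lt {T B : ℝ} {f : ℝ → ℝ → ENNReal}
    (h : ∀ t, ∫⁻ x, f x t ≤ ENNReal.ofReal B) : ∫⁻ t in Ioc 0 T, ∫⁻ x, f x t < ⊤ := by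
  calc ∫⁻ t in Ioc 0 T, ∫⁻ x, f x t ≤ ∫⁻ _ in Ioc 0 T, ENNReal.ofReal B :=
        lintegral_mono fun t => h t
    _ < ⊤ := by simp [ENNReal.mul_lt_top]

theorem memLp_slab_mul {T B : ℝ} {f f' g : ℝ → ℝ → ℝ}
    (hf : Measurable fun p : ℝ × ℝ => f p.1 p.2) (hf' : Measurable fun p : ℝ × ℝ => f' p.1 p.2)
    (hg : Measurable fun p : ℝ × ℝ => g p.1 p.2)
    (hd : ∀ x t, HasDerivAt (fun y => f y t) (f' x t) x)
    (hB : ∀ t, ∫⁻ x, ‖f x t‖ₑ ^ 2 ≤ ENNReal.ofReal B)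
    (h' : ∫⁻ t in Ioc 0 T, ∫⁻ x, ‖f' x t‖ₑ ^ 2 < ⊤)
    (hgB : ∀ t, ∫⁻ x, ‖g x t‖ₑ ^ 2 ≤ ENNReal.ofReal B) :
    MemLp (fun p : ℝ × ℝ => f p.1 p.2 * g p.1 p.2) 2 (slab T) := by
  refine memLp_slab (f := fun x t => f x t * g x t) (hf.mul hg) ?_
  have key : ∀ t, ∫⁻ x, ‖f x t * g x t‖ₑ ^ 2 ≤
      (ENNReal.ofReal B + ∫⁻ x, ‖f' x t‖ₑ ^ 2) * ENNReal.ofReal B := by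
    intro t
    have mg : Measurable fun x => ‖g x t‖ₑ ^ 2 :=
      (hg.comp (measurable_id.prodMk measurable_const)).enorm.pow_const 2
    have mf' : Measurable fun x => f' x t := hf'.comp (measurable_id.prodMk measurable_const)
    calc ∫⁻ x, ‖f x t * g x t‖ₑ ^ 2
        ≤ ∫⁻ x, (ENNReal.ofReal B + ∫⁻ x, ‖f' x t‖ₑ ^ 2) * ‖g x t‖ₑ ^ 2 := by
          refine lintegral_mono fun x => ?_
          rw [enorm_mul, mul_pow]
          gcongr
          exact (enorm_sq_le (fun x => hd x t) mf' x).trans (add_le_add_left (hB t) _)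
      _ = (ENNReal.ofReal B + ∫⁻ x, ‖f' x t‖ₑ ^ 2) * ∫⁻ x, ‖g x t‖ₑ ^ 2 :=
          lintegral_const_mul _ mg
      _ ≤ _ := by gcongr; exact hgB t
  calc _ ≤ ∫⁻ t in Ioc 0 T, (ENNReal.ofReal B + ∫⁻ x, ‖f' x t‖ₑ ^ 2) * ENNReal.ofReal B :=
        lintegral_mono key
    _ = (∫⁻ t in Ioc 0 T, (ENNReal.ofReal B + ∫⁻ x, ‖f' x t‖ₑ ^ 2)) * ENNReal.ofReal B :=
        lintegral_mul_const' _ _ ENNReal.ofReal_ne_top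
    _ < ⊤ := by
        refine ENNReal.mul_lt_top ?_ ENNReal.ofReal_lt_top
        rw [lintegral_add_left measurable_const]
        exact ENNReal.add_lt_top.2 ⟨by simp [ENNReal.mul_lt_top], h'⟩

theorem MemLp.slice {T : ℝ} {f : ℝ × ℝ → ℝ} (h : MemLp f 2 (slab T)) (hm : Measurable f) :
    ∀ᵐ t ∂volume.restrict (Ioc 0 T), MemLp (fun x => f (x, t)) 2 volume := by
  filter_upwards [h.integrable_sq.prod_left_ae] with t ht
  exact (memLp_two_iff_integrable_sq
    (hm.comp (measurable_id.prodMk measurable_const)).aestronglyMeasurable).2 ht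

namespace Flow

variable {μ κ R cv K T : ℝ} (S : Flow μ κ R cv K T)

theorem hK0 {μ κ R cv K T : ℝ} (S : Flow μ κ R cv K T) : 0 < K := lt_of_lt_of_le one_pos S.hK

theorem v_pos (x t : ℝ) : 0 < S.v x t := lt_of_lt_of_le (inv_pos.2 S.hK0) (S.v_lb x t)

theorem Lv (t : ℝ) : MemLp (fun x => S.v x t - 1) 2 volume :=
  memLp_two_of_lintegral ((S.mv.comp (measurable_id.prodMk measurable_const)).sub_const
    1).aestronglyMeasurable ((S.L2v t).trans_lt ENNReal.ofReal_lt_top)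

theorem Lu (t : ℝ) : MemLp (fun x => S.u x t) 2 volume :=
  memLp_two_of_lintegral (S.mu.comp (measurable_id.prodMk measurable_const)).aestronglyMeasurable
    ((S.L2u t).trans_lt ENNReal.ofReal_lt_top)

theorem Lθ (t : ℝ) : MemLp (fun x => S.θ x t - 1) 2 volume :=
  memLp_two_of_lintegral ((S.mθ.comp (measurable_id.prodMk measurable_const)).sub_const
    1).aestronglyMeasurable ((S.L2θ t).trans_lt ENNReal.ofReal_lt_top)

theorem Lux (t : ℝ) : MemLp (fun x => S.ux x t) 2 volume :=
  memLp_two_of_lintegral (S.mux.comp (measurable_id.prodMk measurable_const)).aestronglyMeasurable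
    ((S.L2ux t).trans_lt ENNReal.ofReal_lt_top)

theorem Lθx (t : ℝ) : MemLp (fun x => S.θx x t) 2 volume :=
  memLp_two_of_lintegral (S.mθx.comp (measurable_id.prodMk measurable_const)).aestronglyMeasurable
    ((S.L2θx t).trans_lt ENNReal.ofReal_lt_top)

theorem bd_of_enorm {B y : ℝ} (h : ‖y‖ₑ ^ 2 ≤ ENNReal.ofReal B + ENNReal.ofReal B) :
    |y| ≤ 1 + 2 * max B 0 := by
  have e : ENNReal.ofReal B = ENNReal.ofReal (max B 0) := by
    rcases le_total B 0 with hB | hB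
    · simp [hB, ENNReal.ofReal_of_nonpos]
    · simp [hB]
  rw [e, ← ENNReal.ofReal_add (le_max_right _ _) (le_max_right _ _), ← enorm_pow,
    Real.enorm_eq_ofReal (sq_nonneg _),
    ENNReal.ofReal_le_ofReal_iff (by positivity)] at h
  rw [← sq_abs] at h
  have : 0 ≤ max B 0 := le_max_right _ _
  nlinarith [sq_nonneg (|y| - 1), abs_nonneg y]

theorem bu : BM fun p => S.u p.1 p.2 := ⟨S.mu, _, fun p => bd_of_enorm
  ((enorm_sq_le (fun x => S.du x p.2) (S.mux.comp (measurable_id.prodMk measurable_const))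
    p.1).trans (add_le_add (S.L2u _) (S.L2ux _)))⟩

theorem bθ1 : BM fun p => S.θ p.1 p.2 - 1 := ⟨S.mθ.sub_const 1, _, fun p => bd_of_enorm
  ((enorm_sq_le (f := fun x => S.θ x p.2 - 1) (fun x => (S.dθ x p.2).sub_const 1)
    (S.mθx.comp (measurable_id.prodMk measurable_const))
    p.1).trans (add_le_add (S.L2θ _) (S.L2θx _)))⟩

theorem bθ : BM fun p => S.θ p.1 p.2 := by
  simpa using S.bθ1.add (BM.const 1)

theorem bv1 : BM fun p => S.v p.1 p.2 - 1 := ⟨S.mv.sub_const 1, K + 1, fun p => by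
  have h1 := S.v_pos p.1 p.2
  have h2 := S.v_ub p.1 p.2
  rw [abs_le]; constructor <;> linarith⟩

theorem bvi : BM fun p => (S.v p.1 p.2)⁻¹ := ⟨S.mv.inv, K, fun p => by
  rw [abs_of_pos (inv_pos.2 (S.v_pos _ _))]
  exact inv_le_of_inv_le₀ S.hK0 (S.v_lb _ _)⟩

theorem Pv : MemLp (fun p : ℝ × ℝ => S.v p.1 p.2 - 1) 2 (slab T) :=
  memLp_slab (f := fun x t => S.v x t - 1) (S.mv.sub_const 1) (lintegral_slab_lt S.L2v)
theorem Pu : MemLp (fun p : ℝ × ℝ => S.u p.1 p.2) 2 (slab T) :=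
  memLp_slab S.mu (lintegral_slab_lt S.L2u)
theorem Pθ : MemLp (fun p : ℝ × ℝ => S.θ p.1 p.2 - 1) 2 (slab T) :=
  memLp_slab (f := fun x t => S.θ x t - 1) (S.mθ.sub_const 1) (lintegral_slab_lt S.L2θ)
theorem Pvx : MemLp (fun p : ℝ × ℝ => S.vx p.1 p.2) 2 (slab T) :=
  memLp_slab S.mvx (lintegral_slab_lt S.L2vx)
theorem Pux : MemLp (fun p : ℝ × ℝ => S.ux p.1 p.2) 2 (slab T) :=
  memLp_slab S.mux (lintegral_slab_lt S.L2ux)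
theorem Pθx : MemLp (fun p : ℝ × ℝ => S.θx p.1 p.2) 2 (slab T) :=
  memLp_slab S.mθx (lintegral_slab_lt S.L2θx)
theorem Puxx : MemLp (fun p : ℝ × ℝ => S.uxx p.1 p.2) 2 (slab T) := memLp_slab S.muxx S.L2uxx
theorem Pθxx : MemLp (fun p : ℝ × ℝ => S.θxx p.1 p.2) 2 (slab T) := memLp_slab S.mθxx S.L2θxx
theorem Puxvx : MemLp (fun p : ℝ × ℝ => S.ux p.1 p.2 * S.vx p.1 p.2) 2 (slab T) :=
  memLp_slab_mul S.mux S.muxx S.mvx S.dux S.L2ux S.L2uxx S.L2vx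
theorem Pθxvx : MemLp (fun p : ℝ × ℝ => S.θx p.1 p.2 * S.vx p.1 p.2) 2 (slab T) :=
  memLp_slab_mul S.mθx S.mθxx S.mvx S.dθx S.L2θx S.L2θxx S.L2vx
theorem Puxux : MemLp (fun p : ℝ × ℝ => S.ux p.1 p.2 * S.ux p.1 p.2) 2 (slab T) :=
  memLp_slab_mul S.mux S.muxx S.mux S.dux S.L2ux S.L2uxx S.L2ux

/-- The stress `σ = μ u_x / v - R θ / v`. -/
noncomputable def sg (x t : ℝ) : ℝ := μ * S.ux x t / S.v x t - R * S.θ x t / S.v x t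

/-- The spatial derivative of the stress; it equals `u_t`. -/
noncomputable def sgx (x t : ℝ) : ℝ :=
  μ * (S.uxx x t / S.v x t - S.ux x t * S.vx x t / S.v x t ^ 2)
      - R * (S.θx x t / S.v x t - S.θ x t * S.vx x t / S.v x t ^ 2)

/-- The spatial derivative of the heat flux `κ θ_x / v`. -/
noncomputable def qx (x t : ℝ) : ℝ :=
  κ * (S.θxx x t / S.v x t - S.θx x t * S.vx x t / S.v x t ^ 2)

/-- The time derivative of the temperature, as given by the energy equation. -/
noncomputable def θt (x t : ℝ) : ℝ := (S.qx x t + S.sg x t * S.ux x t) / cv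

theorem dsg (x t : ℝ) : HasDerivAt (fun y => S.sg y t + R) (S.sgx x t) x := by
  have hv := (S.v_pos x t).ne'
  have h := ((((S.dux x t).const_mul μ).fun_div (S.dv x t) hv).fun_sub
    (((S.dθ x t).const_mul R).fun_div (S.dv x t) hv)).add_const R
  refine h.congr_deriv ?_
  unfold sgx
  field_simp

theorem dq (x t : ℝ) : HasDerivAt (fun y => κ * S.θx y t / S.v y t) (S.qx x t) x := by
  have hv := (S.v_pos x t).ne'
  refine (((S.dθx x t).const_mul κ).fun_div (S.dv x t) hv).congr_deriv ?_
  unfold qx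
  field_simp

theorem msg : Measurable fun p : ℝ × ℝ => S.sg p.1 p.2 :=
  ((S.mux.const_mul μ).div S.mv).sub ((S.mθ.const_mul R).div S.mv)

theorem msgx : Measurable fun p : ℝ × ℝ => S.sgx p.1 p.2 := by
  have := S.mv; have := S.mvx; have := S.mux; have := S.muxx; have := S.mθ; have := S.mθx
  unfold sgx; fun_prop

theorem mqx : Measurable fun p : ℝ × ℝ => S.qx p.1 p.2 := by
  have := S.mv; have := S.mvx; have := S.mθx; have := S.mθxx
  unfold qx; fun_prop

theorem mq : Measurable fun p : ℝ × ℝ => κ * S.θx p.1 p.2 / S.v p.1 p.2 :=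
  (S.mθx.const_mul κ).div S.mv

theorem mθt : Measurable fun p : ℝ × ℝ => S.θt p.1 p.2 :=
  (S.mqx.add (S.msg.mul S.mux)).div_const cv

theorem Psg : MemLp (fun p : ℝ × ℝ => S.sg p.1 p.2 + R) 2 (slab T) := by
  have h := (((S.bvi.smul μ).memLp S.Pux).add ((S.bvi.smul (-R)).memLp S.Pθ)).add
    ((S.bvi.smul R).memLp S.Pv)
  refine (memLp_congr_ae (Eventually.of_forall fun p => ?_)).1 h
  have hv := (S.v_pos p.1 p.2).ne'
  simp only [Pi.add_apply, sg]
  field_simp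
  ring

theorem Psgx : MemLp (fun p : ℝ × ℝ => S.sgx p.1 p.2) 2 (slab T) := by
  have h := ((((S.bvi.smul μ).memLp S.Puxx).add (((S.bvi.mul S.bvi).smul (-μ)).memLp S.Puxvx)).add
    ((S.bvi.smul (-R)).memLp S.Pθx)).add
    (((S.bθ.mul (S.bvi.mul S.bvi)).smul R).memLp S.Pvx)
  refine (memLp_congr_ae (Eventually.of_forall fun p => ?_)).1 h
  simp only [Pi.add_apply, sgx]
  ring

theorem Pq : MemLp (fun p : ℝ × ℝ => κ * S.θx p.1 p.2 / S.v p.1 p.2) 2 (slab T) := by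
  refine (memLp_congr_ae (Eventually.of_forall fun p => ?_)).1 ((S.bvi.smul κ).memLp S.Pθx)
  ring

theorem Pqx : MemLp (fun p : ℝ × ℝ => S.qx p.1 p.2) 2 (slab T) := by
  have h := ((S.bvi.smul κ).memLp S.Pθxx).add (((S.bvi.mul S.bvi).smul (-κ)).memLp S.Pθxvx)
  refine (memLp_congr_ae (Eventually.of_forall fun p => ?_)).1 h
  simp only [Pi.add_apply, qx]
  ring

theorem Psgux : MemLp (fun p : ℝ × ℝ => S.sg p.1 p.2 * S.ux p.1 p.2) 2 (slab T) := by
  have h := ((S.bvi.smul μ).memLp S.Puxux).add (((S.bθ.mul S.bvi).smul (-R)).memLp S.Pux)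
  refine (memLp_congr_ae (Eventually.of_forall fun p => ?_)).1 h
  simp only [Pi.add_apply, sg]
  ring

theorem Pθt : MemLp (fun p : ℝ × ℝ => S.θt p.1 p.2) 2 (slab T) := by
  refine (memLp_congr_ae (Eventually.of_forall fun p => ?_)).1
    ((S.Pqx.add S.Psgux).const_mul cv⁻¹)
  simp only [Pi.add_apply, θt]
  ring

end Flow

/-! ### Balance laws for densities -/

/-- A density `V(v) + Θ(θ) + a₂ u² + a₄ u⁴ + u² h(θ)`, with the derivatives of its
one-variable ingredients and the bounds that make its time derivative integrable. -/
structure Density (K : ℝ) where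
  V : ℝ → ℝ
  V' : ℝ → ℝ
  Θ : ℝ → ℝ
  Θ' : ℝ → ℝ
  Θ'' : ℝ → ℝ
  h : ℝ → ℝ
  h' : ℝ → ℝ
  h'' : ℝ → ℝ
  a₂ : ℝ
  a₄ : ℝ
  C : ℝ
  hC : 0 ≤ C
  dV : ∀ y, 0 < y → HasDerivAt V (V' y) y
  dΘ : ∀ y, 0 < y → HasDerivAt Θ (Θ' y) y
  dΘ' : ∀ y, 0 < y → HasDerivAt Θ' (Θ'' y) y
  dh : ∀ y, 0 < y → HasDerivAt h (h' y) y
  dh' : ∀ y, 0 < y → HasDerivAt h' (h'' y) y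
  mV : Measurable V
  mV' : Measurable V'
  mΘ : Measurable Θ
  mΘ' : Measurable Θ'
  mΘ'' : Measurable Θ''
  mh : Measurable h
  mh' : Measurable h'
  mh'' : Measurable h''
  bV : ∀ y, K⁻¹ ≤ y → y ≤ K → |V y| ≤ C * (y - 1) ^ 2
  bV' : ∀ y, K⁻¹ ≤ y → y ≤ K → |V' y| ≤ C * |y - 1|
  bΘ : ∀ y, 0 < y → |Θ y| ≤ C * (y - 1) ^ 2
  bΘ' : ∀ y, 0 < y → |Θ' y| ≤ C * |y - 1|
  bΘ'' : ∀ y, 0 < y → |Θ'' y| ≤ C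
  bh : ∀ y, 0 < y → |h y| ≤ C * (1 + y)
  bh' : ∀ y, 0 < y → |h' y| ≤ C
  bh'' : ∀ y, 0 < y → |h'' y| ≤ C

namespace Flow

variable {μ κ R cv K T : ℝ} (S : Flow μ κ R cv K T) (D : Density K)

/-- The density evaluated along a solution. -/
noncomputable def dens (x t : ℝ) : ℝ :=
  D.V (S.v x t) + D.Θ (S.θ x t) + D.a₂ * S.u x t ^ 2 + D.a₄ * S.u x t ^ 4
    + S.u x t ^ 2 * D.h (S.θ x t)

/-- The partial derivative of the density in `u`. -/
noncomputable def pu (x t : ℝ) : ℝ :=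
  (2 * D.a₂ + 4 * D.a₄ * S.u x t ^ 2 + 2 * D.h (S.θ x t)) * S.u x t

/-- The partial derivative of the density in `θ`. -/
noncomputable def pθ (x t : ℝ) : ℝ := D.Θ' (S.θ x t) + S.u x t ^ 2 * D.h' (S.θ x t)

/-- The spatial derivative of `pu`. -/
noncomputable def pux (x t : ℝ) : ℝ :=
  (2 * D.a₂ + 12 * D.a₄ * S.u x t ^ 2 + 2 * D.h (S.θ x t)) * S.ux x t
    + 2 * S.u x t * D.h' (S.θ x t) * S.θx x t

/-- The spatial derivative of `pθ`. -/
noncomputable def pθx (x t : ℝ) : ℝ :=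
  2 * S.u x t * D.h' (S.θ x t) * S.ux x t
    + (D.Θ'' (S.θ x t) + S.u x t ^ 2 * D.h'' (S.θ x t)) * S.θx x t

/-- The time derivative of the density, as given by the equations. -/
noncomputable def denst (x t : ℝ) : ℝ :=
  D.V' (S.v x t) * S.ux x t + S.pu D x t * S.sgx x t + S.pθ D x t * S.θt x t

/-- The production of the density: its time derivative after integration by parts in space. -/
noncomputable def prodn (x t : ℝ) : ℝ :=
  D.V' (S.v x t) * S.ux x t - S.pux D x t * (S.sg x t + R)
    - cv⁻¹ * (S.pθx D x t * (κ * S.θx x t / S.v x t))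
    + cv⁻¹ * (S.pθ D x t * (S.sg x t * S.ux x t))

theorem bh : BM fun p => D.h (S.θ p.1 p.2) := by
  obtain ⟨_, c, hc⟩ := S.bθ
  refine ⟨D.mh.comp S.mθ, D.C * (1 + c), fun p => (D.bh _ (S.θ_pos _ _)).trans ?_⟩
  have := D.hC
  gcongr
  exact (le_abs_self _).trans (hc p)

theorem bh' : BM fun p => D.h' (S.θ p.1 p.2) :=
  ⟨D.mh'.comp S.mθ, D.C, fun _ => D.bh' _ (S.θ_pos _ _)⟩

theorem bh'' : BM fun p => D.h'' (S.θ p.1 p.2) :=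
  ⟨D.mh''.comp S.mθ, D.C, fun _ => D.bh'' _ (S.θ_pos _ _)⟩

theorem bΘ'' : BM fun p => D.Θ'' (S.θ p.1 p.2) :=
  ⟨D.mΘ''.comp S.mθ, D.C, fun _ => D.bΘ'' _ (S.θ_pos _ _)⟩

theorem PΘ' : MemLp (fun p : ℝ × ℝ => D.Θ' (S.θ p.1 p.2)) 2 (slab T) :=
  S.Pθ.of_le_mul (c := D.C) (D.mΘ'.comp S.mθ).aestronglyMeasurable
    (Eventually.of_forall fun _ => D.bΘ' _ (S.θ_pos _ _))

theorem PV' : MemLp (fun p : ℝ × ℝ => D.V' (S.v p.1 p.2)) 2 (slab T) :=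
  S.Pv.of_le_mul (c := D.C) (D.mV'.comp S.mv).aestronglyMeasurable
    (Eventually.of_forall fun _ => D.bV' _ (S.v_lb _ _) (S.v_ub _ _))

theorem Ppu : MemLp (fun p : ℝ × ℝ => S.pu D p.1 p.2) 2 (slab T) := by
  have h := (((BM.const (2 * D.a₂)).add ((S.bu.mul S.bu).smul (4 * D.a₄))).add
    ((S.bh D).smul 2)).memLp S.Pu
  refine (memLp_congr_ae (Eventually.of_forall fun p => ?_)).1 h
  simp only [pu]; ring

theorem Ppθ : MemLp (fun p : ℝ × ℝ => S.pθ D p.1 p.2) 2 (slab T) := by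
  have h := (S.PΘ' D).add ((S.bu.mul (S.bh' D)).memLp S.Pu)
  refine (memLp_congr_ae (Eventually.of_forall fun p => ?_)).1 h
  simp only [pθ, Pi.add_apply]; ring

theorem Ppux : MemLp (fun p : ℝ × ℝ => S.pux D p.1 p.2) 2 (slab T) := by
  have h := ((((BM.const (2 * D.a₂)).add ((S.bu.mul S.bu).smul (12 * D.a₄))).add
    ((S.bh D).smul 2)).memLp S.Pux).add (((S.bu.mul (S.bh' D)).smul 2).memLp S.Pθx)
  refine (memLp_congr_ae (Eventually.of_forall fun p => ?_)).1 h
  simp only [pux, Pi.add_apply]; ring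

theorem Ppθx : MemLp (fun p : ℝ × ℝ => S.pθx D p.1 p.2) 2 (slab T) := by
  have h := (((S.bu.mul (S.bh' D)).smul 2).memLp S.Pux).add
    (((S.bΘ'' D).add ((S.bu.mul S.bu).mul (S.bh'' D))).memLp S.Pθx)
  refine (memLp_congr_ae (Eventually.of_forall fun p => ?_)).1 h
  simp only [pθx, Pi.add_apply]; ring

theorem mpu : Measurable fun p : ℝ × ℝ => S.pu D p.1 p.2 := by
  have := S.mu; have := (D.mh.comp S.mθ : Measurable fun p : ℝ × ℝ => D.h (S.θ p.1 p.2))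
  unfold pu; fun_prop

theorem mpθ : Measurable fun p : ℝ × ℝ => S.pθ D p.1 p.2 := by
  have := S.mu; have := (D.mh'.comp S.mθ : Measurable fun p : ℝ × ℝ => D.h' (S.θ p.1 p.2))
  have := (D.mΘ'.comp S.mθ : Measurable fun p : ℝ × ℝ => D.Θ' (S.θ p.1 p.2))
  unfold pθ; fun_prop

theorem mpux : Measurable fun p : ℝ × ℝ => S.pux D p.1 p.2 := by
  have := S.mu; have := S.mux; have := S.mθx
  have := (D.mh.comp S.mθ : Measurable fun p : ℝ × ℝ => D.h (S.θ p.1 p.2))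
  have := (D.mh'.comp S.mθ : Measurable fun p : ℝ × ℝ => D.h' (S.θ p.1 p.2))
  unfold pux; fun_prop

theorem mpθx : Measurable fun p : ℝ × ℝ => S.pθx D p.1 p.2 := by
  have := S.mu; have := S.mux; have := S.mθx
  have := (D.mh'.comp S.mθ : Measurable fun p : ℝ × ℝ => D.h' (S.θ p.1 p.2))
  have := (D.mh''.comp S.mθ : Measurable fun p : ℝ × ℝ => D.h'' (S.θ p.1 p.2))
  have := (D.mΘ''.comp S.mθ : Measurable fun p : ℝ × ℝ => D.Θ'' (S.θ p.1 p.2))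
  unfold pθx; fun_prop

theorem dpu (x t : ℝ) : HasDerivAt (fun y => S.pu D y t) (S.pux D x t) x := by
  have h1 := (D.dh _ (S.θ_pos x t)).comp x (S.dθ x t)
  have h := ((((S.du x t).fun_pow 2).const_mul (4 * D.a₄)).const_add (2 * D.a₂)).fun_add
    (h1.const_mul 2) |>.fun_mul (S.du x t)
  refine h.congr_deriv ?_
  simp only [pux, Function.comp]
  push_cast
  ring

theorem dpθ (x t : ℝ) : HasDerivAt (fun y => S.pθ D y t) (S.pθx D x t) x := by
  have h1 := (D.dh' _ (S.θ_pos x t)).comp x (S.dθ x t)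
  have h2 := (D.dΘ' _ (S.θ_pos x t)).comp x (S.dθ x t)
  have h := h2.fun_add (((S.du x t).fun_pow 2).fun_mul h1)
  refine h.congr_deriv ?_
  simp only [pθx, Function.comp]
  push_cast
  ring

theorem int_denst : Integrable (fun p : ℝ × ℝ => S.denst D p.1 p.2) (slab T) :=
  ((mul_int (S.PV' D) S.Pux).add (mul_int (S.Ppu D) S.Psgx)).add (mul_int (S.Ppθ D) S.Pθt)

theorem int_prodn : Integrable (fun p : ℝ × ℝ => S.prodn D p.1 p.2) (slab T) :=
  (((mul_int (S.PV' D) S.Pux).sub (mul_int (S.Ppux D) S.Psg)).sub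
    ((mul_int (S.Ppθx D) S.Pq).const_mul cv⁻¹)).add
    ((mul_int (S.Ppθ D) S.Psgux).const_mul cv⁻¹)

theorem int_dens (t : ℝ) : Integrable fun x => S.dens D x t := by
  obtain ⟨_, c, hc⟩ := S.bu
  obtain ⟨_, d, hd⟩ := S.bh D
  have mv : Measurable fun x => S.v x t := S.mv.comp (measurable_id.prodMk measurable_const)
  have mu : Measurable fun x => S.u x t := S.mu.comp (measurable_id.prodMk measurable_const)
  have mθ : Measurable fun x => S.θ x t := S.mθ.comp (measurable_id.prodMk measurable_const)
  have m1 := D.mV.comp mv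
  have m2 := D.mΘ.comp mθ
  have m3 := D.mh.comp mθ
  have hm : Measurable fun x => S.dens D x t := by
    simp only [Function.comp_def] at m1 m2 m3
    unfold dens; fun_prop
  refine ((((S.Lv t).integrable_sq.const_mul D.C).add
    ((S.Lθ t).integrable_sq.const_mul D.C)).add
    ((S.Lu t).integrable_sq.const_mul (|D.a₂| + |D.a₄| * c ^ 2 + d))).mono'
    hm.aestronglyMeasurable (Eventually.of_forall fun x => ?_)
  have b1 := D.bV _ (S.v_lb x t) (S.v_ub x t)
  have b2 := D.bΘ _ (S.θ_pos x t)
  have b3 : |D.a₂ * S.u x t ^ 2| = |D.a₂| * S.u x t ^ 2 := by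
    rw [abs_mul, abs_of_nonneg (sq_nonneg (S.u x t))]
  have b4 : |D.a₄ * S.u x t ^ 4| ≤ |D.a₄| * c ^ 2 * S.u x t ^ 2 := by
    have e : |D.a₄ * S.u x t ^ 4| = |D.a₄| * S.u x t ^ 2 * S.u x t ^ 2 := by
      rw [abs_mul, abs_of_nonneg (by positivity : 0 ≤ S.u x t ^ 4)]; ring
    have : S.u x t ^ 2 ≤ c ^ 2 := sq_le_sq' (abs_le.1 (hc (x, t))).1 (abs_le.1 (hc (x, t))).2
    rw [e]
    gcongr
  have b5 : |S.u x t ^ 2 * D.h (S.θ x t)| ≤ d * S.u x t ^ 2 := by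
    rw [abs_mul, abs_of_nonneg (sq_nonneg (S.u x t)), mul_comm]
    exact mul_le_mul_of_nonneg_right (hd (x, t)) (sq_nonneg _)
  simp only [Pi.add_apply, Real.norm_eq_abs, dens]
  refine (abs_add_le _ _).trans ?_
  have := (abs_add_le (D.V (S.v x t) + D.Θ (S.θ x t) + D.a₂ * S.u x t ^ 2) (D.a₄ * S.u x t ^ 4))
  have := (abs_add_le (D.V (S.v x t) + D.Θ (S.θ x t)) (D.a₂ * S.u x t ^ 2))
  have := (abs_add_le (D.V (S.v x t)) (D.Θ (S.θ x t)))
  linarith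

/-- Integration by parts in space at almost every time. -/
theorem integral_denst : ∀ᵐ t ∂volume.restrict (Ioc 0 T),
    ∫ x, S.denst D x t = ∫ x, S.prodn D x t := by
  filter_upwards [MemLp.slice (S.PV' D) (D.mV'.comp S.mv), MemLp.slice (S.Ppu D) (S.mpu D),
    MemLp.slice (S.Ppux D) (S.mpux D), MemLp.slice (S.Ppθ D) (S.mpθ D),
    MemLp.slice (S.Ppθx D) (S.mpθx D), MemLp.slice S.Psg (S.msg.add_const R),
    MemLp.slice S.Psgx S.msgx, MemLp.slice S.Pq S.mq, MemLp.slice S.Pqx S.mqx,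
    MemLp.slice S.Psgux (S.msg.mul S.mux)] with t h1 h2 h3 h4 h5 h6 h7 h8 h9 h10
  have i1 := ibp (fun x => S.dpu D x t) (fun x => S.dsg x t) h2 h3 h6 h7
  have i2 := ibp (fun x => S.dpθ D x t) (fun x => S.dq x t) h4 h5 h8 h9
  have e : ∀ x, S.denst D x t = D.V' (S.v x t) * S.ux x t + S.pu D x t * S.sgx x t
      + (cv⁻¹ * (S.pθ D x t * S.qx x t) + cv⁻¹ * (S.pθ D x t * (S.sg x t * S.ux x t))) := by
    intro x; unfold denst θt; ring
  simp_rw [e]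
  have j1 := mul_int h1 (S.Lux t)
  have j2 := mul_int h2 h7
  have j3 := (mul_int h4 h9).const_mul cv⁻¹
  have j4 := (mul_int h4 h10).const_mul cv⁻¹
  have k2 := mul_int h3 h6
  have k3 := (mul_int h5 h8).const_mul cv⁻¹
  unfold prodn
  rw [integral_add (j1.fun_add j2) (j3.fun_add j4), integral_add j1 j2, integral_add j3 j4,
    integral_add ((j1.sub' k2).sub' k3) j4, integral_sub (j1.sub' k2) k3, integral_sub j1 k2,
    integral_const_mul cv⁻¹ (fun x => S.pθ D x t * S.qx x t), i2, i1,
    integral_const_mul cv⁻¹ (fun x => S.pθx D x t * (κ * S.θx x t / S.v x t))]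
  ring

theorem time_cont (x : ℝ) : Continuous (S.dens D x) := by
  have hV : Continuous fun t => D.V (S.v x t) := continuous_iff_continuousAt.2 fun t =>
    ((D.dV _ (S.v_pos x t)).continuousAt).comp (S.cv_t x).continuousAt
  have hΘ : Continuous fun t => D.Θ (S.θ x t) := continuous_iff_continuousAt.2 fun t =>
    ((D.dΘ _ (S.θ_pos x t)).continuousAt).comp (S.cθ_t x).continuousAt
  have hh : Continuous fun t => D.h (S.θ x t) := continuous_iff_continuousAt.2 fun t =>
    ((D.dh _ (S.θ_pos x t)).continuousAt).comp (S.cθ_t x).continuousAt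
  have := S.cu_t x
  unfold dens
  fun_prop

theorem time_deriv (x t : ℝ) (ht : t ∈ Ioo 0 T) :
    HasDerivAt (S.dens D x) (S.denst D x t) t := by
  have hV := (D.dV _ (S.v_pos x t)).comp t (S.dv_t x t ht)
  have hΘ := (D.dΘ _ (S.θ_pos x t)).comp t (S.dθ_t x t ht)
  have hh := (D.dh _ (S.θ_pos x t)).comp t (S.dθ_t x t ht)
  have hu := S.du_t x t ht
  have h := (((hV.fun_add hΘ).fun_add ((hu.fun_pow 2).const_mul D.a₂)).fun_add
    ((hu.fun_pow 4).const_mul D.a₄)).fun_add ((hu.fun_pow 2).fun_mul hh)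
  refine h.congr_deriv ?_
  simp only [denst, pu, pθ, sgx, θt, qx, sg, Function.comp]
  push_cast
  ring

/-- The balance law: the total density changes by the space-time integral of the production. -/
theorem balance {t : ℝ} (h0 : 0 ≤ t) (hT : t ≤ T) :
    (∫ x, S.dens D x t) - ∫ x, S.dens D x 0 = ∫ s in Ioc 0 t, ∫ x, S.prodn D x s := by
  have hsub : Ioc 0 t ⊆ Ioc 0 T := Ioc_subset_Ioc_right hT
  rw [time_integral h0 (S.time_cont D)
    (fun x s hs => S.time_deriv D x s ⟨hs.1, hs.2.trans_le hT⟩) ?_ (S.int_dens D 0)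
    (S.int_dens D t)]
  · exact integral_congr_ae (ae_restrict_of_ae_restrict_of_subset hsub (S.integral_denst D))
  · exact (S.int_denst D).mono_measure
      (Measure.prod_mono le_rfl (Measure.restrict_mono_set _ hsub))

end Flow

/-! ### The basic energy estimate -/

theorem log_upper {y : ℝ} (hy : 0 < y) : y - 1 - Real.log y ≤ (y - 1) ^ 2 / y := by
  have h := Real.one_sub_inv_le_log_of_pos hy
  have e : (y - 1) ^ 2 / y = y - 2 + y⁻¹ := by field_simp; ring
  rw [e]; linarith

theorem log_lower {y : ℝ} (hy : 0 < y) : (y - 1) ^ 2 / (2 * (y + 1)) ≤ y - 1 - Real.log y := by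
  -- `log y = 2 log √y ≤ 2 (√y - 1)`, so the right side is at least `(√y - 1)²`.
  obtain ⟨z, hz, rfl⟩ : ∃ z, 0 < z ∧ y = z ^ 2 := ⟨√y, Real.sqrt_pos.2 hy, (Real.sq_sqrt hy.le).symm⟩
  have h := Real.log_le_sub_one_of_pos hz
  rw [Real.log_pow]
  have h2 : (z ^ 2 - 1) ^ 2 / (2 * (z ^ 2 + 1)) ≤ (z - 1) ^ 2 := by
    rw [div_le_iff₀ (by positivity)]
    nlinarith [mul_nonneg (sq_nonneg (z - 1)) (sq_nonneg (z - 1))]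
  push_cast
  nlinarith

/-- The temperature part of the entropy density, regularised at `θ = 0`. -/
noncomputable def ell (ε y : ℝ) : ℝ := y - 1 - (1 + ε) * Real.log ((y + ε) / (1 + ε))

theorem ell_upper {ε y : ℝ} (hε : 0 < ε) (hy : 0 < y) : ell ε y ≤ (y - 1) ^ 2 / (y + ε) := by
  have h := log_upper (y := (y + ε) / (1 + ε)) (by positivity)
  have e : ell ε y = (1 + ε) * ((y + ε) / (1 + ε) - 1 - Real.log ((y + ε) / (1 + ε))) := by
    unfold ell; field_simp; ring
  have e2 : (y - 1) ^ 2 / (y + ε) =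
      (1 + ε) * (((y + ε) / (1 + ε) - 1) ^ 2 / ((y + ε) / (1 + ε))) := by
    field_simp; ring
  rw [e, e2]
  gcongr

theorem ell_lower {ε y : ℝ} (hε : 0 < ε) (hε1 : ε ≤ 1) (hy : 0 < y) :
    (y - 1) ^ 2 / (y + 1) / 6 ≤ ell ε y := by
  have h := log_lower (y := (y + ε) / (1 + ε)) (by positivity)
  have e : ell ε y = (1 + ε) * ((y + ε) / (1 + ε) - 1 - Real.log ((y + ε) / (1 + ε))) := by
    unfold ell; field_simp; ring
  have e2 : (1 + ε) * (((y + ε) / (1 + ε) - 1) ^ 2 / (2 * ((y + ε) / (1 + ε) + 1))) =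
      (y - 1) ^ 2 / (2 * (y + 1 + 2 * ε)) := by
    field_simp; ring
  calc (y - 1) ^ 2 / (y + 1) / 6 = (y - 1) ^ 2 / ((y + 1) * 6) := by rw [div_div]
    _ ≤ (y - 1) ^ 2 / (2 * (y + 1 + 2 * ε)) :=
        div_le_div_of_nonneg_left (sq_nonneg _) (by positivity) (by linarith)
    _ ≤ ell ε y := by rw [← e2, e]; gcongr

/-- The regularised entropy density
`R (v - 1 - log v) + c_v (θ - 1 - (1 + ε) log ((θ + ε) / (1 + ε))) + u² / 2`. -/
noncomputable def eta {R cv K ε : ℝ} (hR : 0 < R) (hcv : 0 < cv) (hK : 1 ≤ K) (hε : 0 < ε) :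
    Density K where
  V y := R * (y - 1 - Real.log y)
  V' y := R * (1 - y⁻¹)
  Θ y := cv * ell ε y
  Θ' y := cv * ((y - 1) / (y + ε))
  Θ'' y := cv * ((1 + ε) / (y + ε) ^ 2)
  h _ := 0
  h' _ := 0
  h'' _ := 0
  a₂ := 1 / 2
  a₄ := 0
  C := R * K + cv * (1 / ε) + cv * ((1 + ε) / ε ^ 2)
  hC := by have := one_pos.trans_le hK; positivity
  dV y hy := (((hasDerivAt_id y).sub_const 1).sub (Real.hasDerivAt_log hy.ne')).const_mul R
  dΘ y hy := by
    have h1 : HasDerivAt (fun y : ℝ => (y + ε) / (1 + ε)) (1 / (1 + ε)) y :=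
      ((hasDerivAt_id y).add_const ε).div_const _
    have h2 := h1.log (by positivity)
    have h3 := (((hasDerivAt_id y).sub_const 1).sub (h2.const_mul (1 + ε))).const_mul cv
    refine h3.congr_deriv ?_
    field_simp
    ring
  dΘ' y hy := by
    have h3 := (((hasDerivAt_id y).sub_const 1).fun_div ((hasDerivAt_id y).add_const ε)
      (by simp only [id]; positivity)).const_mul cv
    refine h3.congr_deriv ?_
    simp only [id]
    congr 2
    ring
  dh y _ := hasDerivAt_const _ _
  dh' y _ := hasDerivAt_const _ _
  mV := by fun_prop
  mV' := by fun_prop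
  mΘ := by unfold ell; fun_prop
  mΘ' := by fun_prop
  mΘ'' := by fun_prop
  mh := by fun_prop
  mh' := by fun_prop
  mh'' := by fun_prop
  bV y hy _ := by
    have hK0 := one_pos.trans_le hK
    have hy0 : 0 < y := lt_of_lt_of_le (inv_pos.2 hK0) hy
    have h1 := log_upper hy0
    have h2 := Real.log_le_sub_one_of_pos hy0
    have h3 : y⁻¹ ≤ K := inv_le_of_inv_le₀ hK0 hy
    rw [abs_of_nonneg (mul_nonneg hR.le (by linarith))]
    calc R * (y - 1 - Real.log y) ≤ R * ((y - 1) ^ 2 * K) := by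
          gcongr
          refine h1.trans ?_
          rw [div_eq_mul_inv]; gcongr
      _ = (R * K) * (y - 1) ^ 2 := by ring
      _ ≤ _ := by
          gcongr
          have : 0 ≤ cv * (1 / ε) + cv * ((1 + ε) / ε ^ 2) := by positivity
          linarith
  bV' y hy _ := by
    have hK0 := one_pos.trans_le hK
    have hy0 : 0 < y := lt_of_lt_of_le (inv_pos.2 hK0) hy
    have h3 : y⁻¹ ≤ K := inv_le_of_inv_le₀ hK0 hy
    have e : R * (1 - y⁻¹) = R * y⁻¹ * (y - 1) := by field_simp
    rw [e, abs_mul, abs_of_pos (by positivity : 0 < R * y⁻¹)]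
    gcongr
    have : 0 ≤ cv * (1 / ε) + cv * ((1 + ε) / ε ^ 2) := by positivity
    have : R * y⁻¹ ≤ R * K := by gcongr
    linarith
  bΘ y hy := by
    have hK0 := one_pos.trans_le hK
    have h1 := ell_upper hε hy
    have h2 : 0 ≤ ell ε y := by
      have h := Real.log_le_sub_one_of_pos (x := (y + ε) / (1 + ε)) (by positivity)
      have e : ell ε y = (1 + ε) * ((y + ε) / (1 + ε) - 1 - Real.log ((y + ε) / (1 + ε))) := by
        unfold ell; field_simp; ring
      rw [e]
      exact mul_nonneg (by positivity) (by linarith)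
    rw [abs_of_nonneg (mul_nonneg hcv.le h2)]
    calc cv * ell ε y ≤ cv * ((y - 1) ^ 2 * (1 / ε)) := by
          gcongr
          refine h1.trans ?_
          rw [div_eq_mul_one_div]; gcongr; linarith
      _ = cv * (1 / ε) * (y - 1) ^ 2 := by ring
      _ ≤ _ := by
          gcongr
          have : 0 ≤ R * K + cv * ((1 + ε) / ε ^ 2) := by positivity
          linarith
  bΘ' y hy := by
    have hK0 := one_pos.trans_le hK
    have e : cv * ((y - 1) / (y + ε)) = cv * (1 / (y + ε)) * (y - 1) := by ring
    rw [e, abs_mul, abs_of_pos (by positivity : 0 < cv * (1 / (y + ε)))]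
    gcongr
    have : 0 ≤ R * K + cv * ((1 + ε) / ε ^ 2) := by positivity
    have : cv * (1 / (y + ε)) ≤ cv * (1 / ε) := by gcongr; linarith
    linarith
  bΘ'' y hy := by
    have hK0 := one_pos.trans_le hK
    rw [abs_of_pos (by positivity)]
    have : 0 ≤ R * K + cv * (1 / ε) := by positivity
    have : cv * ((1 + ε) / (y + ε) ^ 2) ≤ cv * ((1 + ε) / ε ^ 2) := by gcongr; linarith
    linarith
  bh y hy := by
    have hK0 := one_pos.trans_le hK
    rw [abs_zero]; positivity
  bh' y hy := by
    have hK0 := one_pos.trans_le hK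
    rw [abs_zero]; positivity
  bh'' y hy := by
    have hK0 := one_pos.trans_le hK
    rw [abs_zero]; positivity

namespace Flow

variable {μ κ R cv K T : ℝ} (S : Flow μ κ R cv K T)

theorem balance_slab (D : Density K) {t : ℝ} (h0 : 0 ≤ t) (hT : t ≤ T) :
    (∫ x, S.dens D x t) - ∫ x, S.dens D x 0 = ∫ p, S.prodn D p.1 p.2 ∂slab t := by
  rw [S.balance D h0 hT, integral_prod_symm]
  exact (S.int_prodn D).mono_measure
    (Measure.prod_mono le_rfl (Measure.restrict_mono_set _ (Ioc_subset_Ioc_right hT)))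

/-- The production of the regularised entropy: besides the two dissipative terms only a
remainder proportional to `ε / (θ + ε)` is left. -/
theorem prodn_eta {ε : ℝ} (hε : 0 < ε) (hε1 : ε ≤ 1) (x t : ℝ) :
    S.prodn (eta S.hR S.hcv S.hK hε) x t ≤
      -(μ / K * (S.ux x t ^ 2 / (S.θ x t + 1)) + κ / K * (S.θx x t ^ 2 / (S.θ x t + 1) ^ 2))
      + R * K * (|(S.θ x t - 1) * S.ux x t| * (ε / (S.θ x t + ε))) := by
  have hv := S.v_pos x t
  have hvK := S.v_ub x t
  have hvl := S.v_lb x t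
  have hθ := S.θ_pos x t
  have hK := S.hK0
  have hcv := S.hcv
  have hμ := S.hμ
  have hκ := S.hκ
  have hR := S.hR
  simp only [prodn, eta, pux, pθx, pθ, sg]
  generalize S.v x t = v at *
  generalize S.θ x t = θ at *
  generalize S.u x t = u at *
  generalize S.ux x t = a at *
  generalize S.θx x t = b at *
  have e : R * (1 - v⁻¹) * a -
        ((2 * (1 / 2) + 12 * 0 * u ^ 2 + 2 * 0) * a + 2 * u * 0 * b) * (μ * a / v - R * θ / v + R) -
      cv⁻¹ * ((2 * u * 0 * a + (cv * ((1 + ε) / (θ + ε) ^ 2) + u ^ 2 * 0) * b) * (κ * b / v)) +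
      cv⁻¹ * ((cv * ((θ - 1) / (θ + ε)) + u ^ 2 * 0) * ((μ * a / v - R * θ / v) * a)) =
      -(μ / v * (a ^ 2 * ((1 + ε) / (θ + ε))) + κ / v * (b ^ 2 * ((1 + ε) / (θ + ε) ^ 2)))
      + R * v⁻¹ * (((θ - 1) * a) * (ε / (θ + ε))) := by
    field_simp
    ring
  rw [e]
  have hvi : v⁻¹ ≤ K := inv_le_of_inv_le₀ hK hvl
  have h1 : μ / K * (a ^ 2 / (θ + 1)) ≤ μ / v * (a ^ 2 * ((1 + ε) / (θ + ε))) := by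
    rw [div_eq_mul_one_div (a ^ 2)]
    gcongr
    all_goals linarith
  have h2 : κ / K * (b ^ 2 / (θ + 1) ^ 2) ≤ κ / v * (b ^ 2 * ((1 + ε) / (θ + ε) ^ 2)) := by
    rw [div_eq_mul_one_div (b ^ 2)]
    gcongr
    all_goals linarith
  have h3 : R * v⁻¹ * (((θ - 1) * a) * (ε / (θ + ε))) ≤ R * K * (|(θ - 1) * a| * (ε / (θ + ε))) := by
    calc _ ≤ R * v⁻¹ * (|(θ - 1) * a| * (ε / (θ + ε))) :=
          mul_le_mul_of_nonneg_left (mul_le_mul_of_nonneg_right (le_abs_self _) (by positivity))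
            (by positivity)
      _ ≤ _ := by gcongr
  linarith

theorem int_uxθ : Integrable (fun p : ℝ × ℝ => S.ux p.1 p.2 ^ 2 / (S.θ p.1 p.2 + 1)) (slab T) := by
  have hb : BM fun p : ℝ × ℝ => (S.θ p.1 p.2 + 1)⁻¹ := ⟨(S.mθ.add_const 1).inv, 1, fun p => by
    have := S.θ_pos p.1 p.2
    rw [abs_of_pos (by positivity)]
    exact inv_le_one_of_one_le₀ (by linarith)⟩
  refine (hb.integrable S.Pux.integrable_sq).congr (Eventually.of_forall fun p => ?_)
  simp only; ring

theorem int_θxθ :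
    Integrable (fun p : ℝ × ℝ => S.θx p.1 p.2 ^ 2 / (S.θ p.1 p.2 + 1) ^ 2) (slab T) := by
  have hb : BM fun p : ℝ × ℝ => (S.θ p.1 p.2 + 1)⁻¹ := ⟨(S.mθ.add_const 1).inv, 1, fun p => by
    have := S.θ_pos p.1 p.2
    rw [abs_of_pos (by positivity)]
    exact inv_le_one_of_one_le₀ (by linarith)⟩
  refine ((hb.mul hb).integrable S.Pθx.integrable_sq).congr (Eventually.of_forall fun p => ?_)
  have := S.θ_pos p.1 p.2
  simp only; field_simp

/-- The remainder in the regularised entropy balance vanishes as `ε → 0`, by dominated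
convergence. -/
theorem exists_eps : ∃ ε : ℝ, 0 < ε ∧ ε ≤ 1 ∧
    Integrable (fun p : ℝ × ℝ => R * K * (|(S.θ p.1 p.2 - 1) * S.ux p.1 p.2| *
      (ε / (S.θ p.1 p.2 + ε)))) (slab T) ∧
    ∫ p : ℝ × ℝ, R * K * (|(S.θ p.1 p.2 - 1) * S.ux p.1 p.2| *
      (ε / (S.θ p.1 p.2 + ε))) ∂slab T ≤ 1 := by
  have hi : Integrable (fun p : ℝ × ℝ => R * K * |(S.θ p.1 p.2 - 1) * S.ux p.1 p.2|) (slab T) :=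
    (mul_int S.Pθ S.Pux).abs.const_mul _
  have hRK : 0 ≤ R * K := (mul_pos S.hR S.hK0).le
  have m1 := S.mθ
  have m2 := S.mux
  set F : ℕ → ℝ × ℝ → ℝ := fun n p => R * K * (|(S.θ p.1 p.2 - 1) * S.ux p.1 p.2| *
      ((1 / (n + 1 : ℝ)) / (S.θ p.1 p.2 + 1 / (n + 1 : ℝ)))) with hF
  have mF : ∀ n, AEStronglyMeasurable (F n) (slab T) := fun n => by
    apply Measurable.aestronglyMeasurable
    simp only [hF, ← Real.norm_eq_abs]
    fun_prop
  have bF : ∀ n p, ‖F n p‖ ≤ R * K * |(S.θ p.1 p.2 - 1) * S.ux p.1 p.2| := fun n p => by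
    have hθ := S.θ_pos p.1 p.2
    have hn : (0 : ℝ) < 1 / (n + 1 : ℝ) := by positivity
    have h1 : (1 / (n + 1 : ℝ)) / (S.θ p.1 p.2 + 1 / (n + 1 : ℝ)) ≤ 1 := by
      rw [div_le_one (by positivity)]; linarith
    rw [Real.norm_eq_abs, abs_of_nonneg (by positivity)]
    exact mul_le_mul_of_nonneg_left (mul_le_of_le_one_right (abs_nonneg _) h1) hRK
  have key := tendsto_integral_of_dominated_convergence (μ := slab T) (F := F) (f := fun _ => 0) _ mF hi
    (fun n => Eventually.of_forall (bF n)) (Eventually.of_forall fun p => by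
      have hθ := S.θ_pos p.1 p.2
      have h1 := tendsto_one_div_add_atTop_nhds_zero_nat (𝕜 := ℝ)
      have h2 := h1.div (h1.const_add (S.θ p.1 p.2)) (by simpa using hθ.ne')
      have h3 := (h2.const_mul |(S.θ p.1 p.2 - 1) * S.ux p.1 p.2|).const_mul (R * K)
      simpa [hF] using h3)
  rw [integral_zero] at key
  obtain ⟨n, hn⟩ := (key.eventually_le_const one_pos).exists
  refine ⟨1 / (n + 1 : ℝ), by positivity, ?_, hi.mono' (mF n) (Eventually.of_forall (bF n)), hn⟩
  rw [div_le_one (by positivity)]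
  have : (0 : ℝ) ≤ n := Nat.cast_nonneg n
  linarith

theorem dens_eta {ε : ℝ} (hε : 0 < ε) (x t : ℝ) : S.dens (eta S.hR S.hcv S.hK hε) x t =
    R * (S.v x t - 1 - Real.log (S.v x t)) + cv * ell ε (S.θ x t) + S.u x t ^ 2 / 2 := by
  simp only [dens, eta]
  ring

theorem dens_eta_lower {ε : ℝ} (hε : 0 < ε) (hε1 : ε ≤ 1) (x t : ℝ) :
    R / (2 * (K + 1)) * (S.v x t - 1) ^ 2 + cv / 6 * ((S.θ x t - 1) ^ 2 / (S.θ x t + 1))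
      + S.u x t ^ 2 / 2 ≤ S.dens (eta S.hR S.hcv S.hK hε) x t := by
  rw [dens_eta]
  have hv := S.v_pos x t
  have hvK := S.v_ub x t
  have hR := S.hR
  have hcv := S.hcv
  have hK := S.hK0
  have h1 := log_lower hv
  have h2 := ell_lower hε hε1 (S.θ_pos x t)
  have h3 : R / (2 * (K + 1)) * (S.v x t - 1) ^ 2 ≤ R * (S.v x t - 1 - Real.log (S.v x t)) := by
    calc R / (2 * (K + 1)) * (S.v x t - 1) ^ 2 = R * ((S.v x t - 1) ^ 2 / (2 * (K + 1))) := by ring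
      _ ≤ R * ((S.v x t - 1) ^ 2 / (2 * (S.v x t + 1))) := by gcongr
      _ ≤ _ := by gcongr
  have h4 : cv / 6 * ((S.θ x t - 1) ^ 2 / (S.θ x t + 1)) ≤ cv * ell ε (S.θ x t) := by
    calc _ = cv * ((S.θ x t - 1) ^ 2 / (S.θ x t + 1) / 6) := by ring
      _ ≤ _ := by gcongr
  linarith

theorem int_g (t : ℝ) : Integrable fun x => (S.θ x t - 1) ^ 2 / (S.θ x t + 1) := by
  have mθ : Measurable fun x => S.θ x t := S.mθ.comp (measurable_id.prodMk measurable_const)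
  refine (S.Lθ t).integrable_sq.mono'
    (by fun_prop : Measurable _).aestronglyMeasurable (Eventually.of_forall fun x => ?_)
  have := S.θ_pos x t
  rw [Real.norm_eq_abs, abs_of_nonneg (by positivity)]
  exact div_le_self (sq_nonneg _) (by linarith)

/-- The constant of the basic energy estimate. -/
noncomputable def enC (μ κ R cv K M m : ℝ) : ℝ :=
  ((1 / 2 + R * K + cv / m) * M ^ 2 + 1) * (2 + 2 * (K + 1) / R + 6 / cv + K / μ + K / κ)

/-- The basic energy estimate, from the balance of the regularised entropy. -/
theorem energy {M m : ℝ} (hm : 0 < m) (hu : ∫ x, S.u x 0 ^ 2 ≤ M ^ 2)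
    (hv : ∫ x, (S.v x 0 - 1) ^ 2 ≤ M ^ 2) (hθ : ∫ x, (S.θ x 0 - 1) ^ 2 ≤ M ^ 2)
    (hθm : ∀ x, m ≤ S.θ x 0) :
    (∀ t ∈ Icc 0 T, ∫ x, S.u x t ^ 2 ≤ enC μ κ R cv K M m ∧
      ∫ x, (S.v x t - 1) ^ 2 ≤ enC μ κ R cv K M m ∧
      ∫ x, (S.θ x t - 1) ^ 2 / (S.θ x t + 1) ≤ enC μ κ R cv K M m) ∧
    ∫ p, S.ux p.1 p.2 ^ 2 / (S.θ p.1 p.2 + 1) ∂slab T ≤ enC μ κ R cv K M m ∧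
    ∫ p, S.θx p.1 p.2 ^ 2 / (S.θ p.1 p.2 + 1) ^ 2 ∂slab T ≤ enC μ κ R cv K M m := by
  obtain ⟨ε, hε, hε1, hri, hr⟩ := S.exists_eps
  have hμ := S.hμ
  have hκ := S.hκ
  have hR := S.hR
  have hcv := S.hcv
  have hK := S.hK0
  set D := eta S.hR S.hcv S.hK hε with hD
  have hdlow := S.dens_eta_lower hε hε1
  rw [← hD] at hdlow
  set E0 := (1 / 2 + R * K + cv / m) * M ^ 2 + 1 with hE0
  have hE0p : 0 ≤ E0 := by positivity
  have hd0 : ∫ x, S.dens D x 0 ≤ E0 - 1 := by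
    have i1 := (S.Lu 0).integrable_sq.const_mul (1 / 2)
    have i2 := (S.Lv 0).integrable_sq.const_mul (R * K)
    have i3 := (S.Lθ 0).integrable_sq.const_mul (cv / m)
    calc ∫ x, S.dens D x 0 ≤ ∫ x, (1 / 2 * S.u x 0 ^ 2 + R * K * (S.v x 0 - 1) ^ 2
          + cv / m * (S.θ x 0 - 1) ^ 2) := by
          refine integral_mono (S.int_dens D 0) ((i1.fun_add i2).fun_add i3) fun x => ?_
          show S.dens D x 0 ≤ _
          rw [hD, dens_eta]
          have hv := S.v_pos x 0
          have hth := S.θ_pos x 0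
          have hvi : (S.v x 0)⁻¹ ≤ K := inv_le_of_inv_le₀ hK (S.v_lb x 0)
          have a1 : R * (S.v x 0 - 1 - Real.log (S.v x 0)) ≤ R * K * (S.v x 0 - 1) ^ 2 := by
            calc _ ≤ R * ((S.v x 0 - 1) ^ 2 * (S.v x 0)⁻¹) := by
                  rw [← div_eq_mul_inv]; gcongr; exact log_upper hv
              _ ≤ R * ((S.v x 0 - 1) ^ 2 * K) := by gcongr
              _ = _ := by ring
          have a2 : cv * ell ε (S.θ x 0) ≤ cv / m * (S.θ x 0 - 1) ^ 2 := by
            calc _ ≤ cv * ((S.θ x 0 - 1) ^ 2 / (S.θ x 0 + ε)) := by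
                  gcongr; exact ell_upper hε hth
              _ ≤ cv * ((S.θ x 0 - 1) ^ 2 / m) := by gcongr; linarith [hθm x]
              _ = _ := by ring
          linarith
      _ = 1 / 2 * (∫ x, S.u x 0 ^ 2) + R * K * (∫ x, (S.v x 0 - 1) ^ 2)
          + cv / m * ∫ x, (S.θ x 0 - 1) ^ 2 := by
          rw [integral_add (i1.fun_add i2) i3, integral_add i1 i2, integral_const_mul,
            integral_const_mul, integral_const_mul]
      _ ≤ 1 / 2 * M ^ 2 + R * K * M ^ 2 + cv / m * M ^ 2 := by gcongr
      _ = E0 - 1 := by rw [hE0]; ring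
  have hdiss : ∀ t, 0 ≤ t → t ≤ T → (∫ x, S.dens D x t)
      + (μ / K * ∫ p, S.ux p.1 p.2 ^ 2 / (S.θ p.1 p.2 + 1) ∂slab t)
      + (κ / K * ∫ p, S.θx p.1 p.2 ^ 2 / (S.θ p.1 p.2 + 1) ^ 2 ∂slab t) ≤ E0 := by
    intro t h0 hT
    have hle : slab t ≤ slab T :=
      Measure.prod_mono le_rfl (Measure.restrict_mono_set _ (Ioc_subset_Ioc_right hT))
    have hb := S.balance_slab D h0 hT
    have j1 := (S.int_uxθ.mono_measure hle).const_mul (μ / K)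
    have j2 := (S.int_θxθ.mono_measure hle).const_mul (κ / K)
    have j3 := hri.mono_measure hle
    have h1 : ∫ p, S.prodn D p.1 p.2 ∂slab t ≤
        -((μ / K * ∫ p, S.ux p.1 p.2 ^ 2 / (S.θ p.1 p.2 + 1) ∂slab t)
        + (κ / K * ∫ p, S.θx p.1 p.2 ^ 2 / (S.θ p.1 p.2 + 1) ^ 2 ∂slab t))
        + ∫ p : ℝ × ℝ, R * K * (|(S.θ p.1 p.2 - 1) * S.ux p.1 p.2| *
          (ε / (S.θ p.1 p.2 + ε))) ∂slab t := by
      rw [← integral_const_mul, ← integral_const_mul, ← integral_add j1 j2, ← integral_neg]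
      exact (integral_mono ((S.int_prodn D).mono_measure hle) ((j1.fun_add j2).neg.add j3)
        fun p => S.prodn_eta hε hε1 p.1 p.2).trans_eq (integral_add (j1.fun_add j2).neg j3)
    have h2 : ∫ p : ℝ × ℝ, R * K * (|(S.θ p.1 p.2 - 1) * S.ux p.1 p.2| *
          (ε / (S.θ p.1 p.2 + ε))) ∂slab t ≤ ∫ p : ℝ × ℝ, R * K *
          (|(S.θ p.1 p.2 - 1) * S.ux p.1 p.2| * (ε / (S.θ p.1 p.2 + ε))) ∂slab T :=
      integral_mono_measure hle (Eventually.of_forall fun p => by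
        have := S.θ_pos p.1 p.2
        show (0 : ℝ) ≤ _
        positivity) hri
    linarith
  have hpos1 : ∀ t, 0 ≤ ∫ p, S.ux p.1 p.2 ^ 2 / (S.θ p.1 p.2 + 1) ∂slab t := fun t =>
    integral_nonneg fun p => by have := S.θ_pos p.1 p.2; positivity
  have hpos2 : ∀ t, 0 ≤ ∫ p, S.θx p.1 p.2 ^ 2 / (S.θ p.1 p.2 + 1) ^ 2 ∂slab t := fun t =>
    integral_nonneg fun p => by have := S.θ_pos p.1 p.2; positivity
  have hlow : ∀ t, R / (2 * (K + 1)) * (∫ x, (S.v x t - 1) ^ 2)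
      + cv / 6 * (∫ x, (S.θ x t - 1) ^ 2 / (S.θ x t + 1)) + 1 / 2 * (∫ x, S.u x t ^ 2)
      ≤ ∫ x, S.dens D x t := by
    intro t
    have i1 := (S.Lv t).integrable_sq.const_mul (R / (2 * (K + 1)))
    have i2 := (S.int_g t).const_mul (cv / 6)
    have i3 := (S.Lu t).integrable_sq.const_mul (1 / 2)
    rw [← integral_const_mul, ← integral_const_mul, ← integral_const_mul, ← integral_add i1 i2,
      ← integral_add (i1.fun_add i2) i3]
    refine integral_mono ((i1.fun_add i2).fun_add i3) (S.int_dens D t) fun x => ?_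
    have := hdlow x t
    simp only
    linarith
  have n1 : ∀ t, 0 ≤ ∫ x, (S.v x t - 1) ^ 2 := fun t => integral_nonneg fun x => sq_nonneg _
  have n2 : ∀ t, 0 ≤ ∫ x, S.u x t ^ 2 := fun t => integral_nonneg fun x => sq_nonneg _
  have n3 : ∀ t, 0 ≤ ∫ x, (S.θ x t - 1) ^ 2 / (S.θ x t + 1) := fun t =>
    integral_nonneg fun x => by have := S.θ_pos x t; positivity
  have aux : ∀ c X : ℝ, 0 < c → c * X ≤ E0 → c⁻¹ ≤ 2 + 2 * (K + 1) / R + 6 / cv + K / μ + K / κ →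
      X ≤ enC μ κ R cv K M m := by
    intro c X hc hX hci
    calc X = c * X * c⁻¹ := by field_simp
      _ ≤ E0 * c⁻¹ := by gcongr
      _ ≤ E0 * _ := by gcongr
  have p1 : 0 ≤ 2 * (K + 1) / R := by positivity
  have p2 : 0 ≤ 6 / cv := by positivity
  have p3 : 0 ≤ K / μ := by positivity
  have p4 : 0 ≤ K / κ := by positivity
  have q1 : ∀ t, 0 ≤ R / (2 * (K + 1)) * ∫ x, (S.v x t - 1) ^ 2 := fun t => by
    have := n1 t; positivity
  have q2 : ∀ t, 0 ≤ cv / 6 * ∫ x, (S.θ x t - 1) ^ 2 / (S.θ x t + 1) := fun t => by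
    have := n3 t; positivity
  have q3 : ∀ t, 0 ≤ μ / K * ∫ p, S.ux p.1 p.2 ^ 2 / (S.θ p.1 p.2 + 1) ∂slab t := fun t => by
    have := hpos1 t; positivity
  have q4 : ∀ t, 0 ≤ κ / K * ∫ p, S.θx p.1 p.2 ^ 2 / (S.θ p.1 p.2 + 1) ^ 2 ∂slab t := fun t => by
    have := hpos2 t; positivity
  refine ⟨fun t ht => ⟨?_, ?_, ?_⟩, ?_, ?_⟩
  · refine aux (1 / 2) _ (by norm_num) ?_ (by norm_num; linarith)
    linarith [hdiss t ht.1 ht.2, hlow t, q1 t, q2 t, q3 t, q4 t]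
  · refine aux (R / (2 * (K + 1))) _ (by positivity) ?_ (by rw [inv_div]; linarith)
    linarith [hdiss t ht.1 ht.2, hlow t, n2 t, q2 t, q3 t, q4 t]
  · refine aux (cv / 6) _ (by positivity) ?_ (by rw [inv_div]; linarith)
    linarith [hdiss t ht.1 ht.2, hlow t, n2 t, q1 t, q3 t, q4 t]
  · refine aux (μ / K) _ (by positivity) ?_ (by rw [inv_div]; linarith)
    linarith [hdiss T S.hT.le le_rfl, hlow T, n2 T, q1 T, q2 T, q4 T]
  · refine aux (κ / K) _ (by positivity) ?_ (by rw [inv_div]; linarith)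
    linarith [hdiss T S.hT.le le_rfl, hlow T, n2 T, q1 T, q2 T, q3 T]

end Flow

/-! ### The second density: pointwise bounds -/

/-- Young's inequality with weights. -/
theorem young {c s x y Y : ℝ} (hc : 0 < c) (hs : 0 < s) (h : y ^ 2 ≤ 4 * s * Y) :
    x * y ≤ c * (s * x ^ 2) + Y / c := by
  have h1 : 0 ≤ (2 * c * s * x - y) ^ 2 := sq_nonneg _
  have h2 : x * y * (4 * c * s) ≤ (c * (s * x ^ 2) + Y / c) * (4 * c * s) := by
    have e : (c * (s * x ^ 2) + Y / c) * (4 * c * s) = 4 * c ^ 2 * s ^ 2 * x ^ 2 + 4 * s * Y := by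
      field_simp
    rw [e]; linarith
  exact le_of_mul_le_mul_right h2 (by positivity)

set_option maxHeartbeats 1000000 in
/-- The algebra behind the second dissipation estimate.  All cross terms in the production are
absorbed by the dissipative terms, up to quantities that the basic energy estimate controls.
The letters stand for `w = 1/v`, `p = Rθ/v`, `q₁ + q₂ = p - R`, `s = θ + 1`,
`g = (θ-1)²/(θ+1)`, and for the one-variable ingredients of the density at `θ`. -/
theorem absorb {μ κ cv K P A c₁ c₂ w p q₁ q₂ h₀ h₂ h₂' η η₂ s g a b u Z : ℝ}
    (hμ : 0 < μ) (hκ : 0 < κ) (hcv : 0 < cv) (hK : 1 ≤ K)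
    (hA : 0 < A) (hc₁ : c₁ = μ / (4 * K)) (hc₂ : c₂ = 2 * κ / (3 * K))
    (hAμ : 12 * A * μ / K = 3 + 196 * μ ^ 2 * K ^ 2 / (c₂ / 8)
      + 196 * cv⁻¹ ^ 2 * κ ^ 2 * K ^ 2 / (c₂ / 8) + 14 * cv⁻¹ * μ * K)
    (hw1 : K⁻¹ ≤ w) (hw2 : w ≤ K) (hs : 1 ≤ s)
    (hp : p ^ 2 ≤ P ^ 2 * s ^ 2) (hq : (q₁ + q₂) ^ 2 ≤ P ^ 2 * s ^ 2)
    (hq₁ : q₁ ^ 2 ≤ P ^ 2 * g ^ 2) (hq₂ : q₂ ^ 2 ≤ P ^ 2 * Z)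
    (hη : |η| ≤ 14) (hηs : |η| * s ≤ 14 * g) (hη₂ : 0 ≤ η₂)
    (hh₀ : 0 ≤ h₀) (hh₀s : s / 8 - 16 / s ≤ h₀) (hh₀g : h₀ ^ 2 * s ≤ g ^ 3)
    (hh₂ : h₂ ≤ 2 * h₀ + 8) (hh₂g : h₂ ^ 2 * s ≤ 36 * g ^ 3)
    (hh₂' : 2 / 3 - 6 / s ^ 2 ≤ h₂') :
    -(((12 * A * u ^ 2 + 2 * (2 * h₀)) * a + 2 * u * η * b) * (μ * a * w - (q₁ + q₂)))
      - cv⁻¹ * ((2 * u * η * a + (cv * h₂' + u ^ 2 * η₂) * b) * (κ * b * w))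
      + cv⁻¹ * ((cv * h₂ + u ^ 2 * η) * ((μ * a * w - p) * a))
    ≤ -(c₁ / 2 * (s * a ^ 2) + c₂ / 2 * b ^ 2 + u ^ 2 * a ^ 2)
      + (32 * μ / K + (8 * μ * K + 1) ^ 2 / 4 / (c₁ / 4)) * (a ^ 2 / s)
      + 6 * κ * K * (b ^ 2 / s ^ 2)
      + (4 * P ^ 2 / (c₁ / 8) + 9 * P ^ 2 / (c₁ / 8)) * g ^ 3
      + (196 * P ^ 2 / (c₂ / 8) + 49 * cv⁻¹ ^ 2 * P ^ 2 + 36 * A ^ 2 * P ^ 2) * (u ^ 2 * g ^ 2)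
      + 36 * A ^ 2 * P ^ 2 * (u ^ 4 * Z) := by
  have hK0 : 0 < K := one_pos.trans_le hK
  have hc1 : 0 < c₁ := by rw [hc₁]; positivity
  have hc2 : 0 < c₂ := by rw [hc₂]; positivity
  have hs0 : 0 < s := one_pos.trans_le hs
  have hw0 : 0 < w := lt_of_lt_of_le (inv_pos.2 hK0) hw1
  have hk : 0 < cv⁻¹ := inv_pos.2 hcv
  have hkc : cv⁻¹ * cv = 1 := inv_mul_cancel₀ hcv.ne'
  have hη2 : η ^ 2 ≤ 196 := by
    have := abs_le.1 hη; nlinarith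
  have hηs2 : η ^ 2 * s ^ 2 ≤ 196 * g ^ 2 := by
    have h := mul_self_le_mul_self (by positivity) hηs
    calc η ^ 2 * s ^ 2 = |η| ^ 2 * s ^ 2 := by rw [sq_abs]
      _ ≤ _ := by nlinarith
  have hw2' : w ^ 2 ≤ K ^ 2 := by gcongr
  generalize cv⁻¹ = k at *
  -- the viscous terms
  have t1 : -(12 * A * u ^ 2 * μ * a ^ 2 * w) ≤ -(12 * A * μ / K * (u ^ 2 * a ^ 2)) := by
    have : 12 * A * μ * (u ^ 2 * a ^ 2) * K⁻¹ ≤ 12 * A * μ * (u ^ 2 * a ^ 2) * w := by gcongr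
    have e : 12 * A * μ / K * (u ^ 2 * a ^ 2) = 12 * A * μ * (u ^ 2 * a ^ 2) * K⁻¹ := by ring
    rw [e]; linarith
  have t2 : -(4 * h₀ * μ * a ^ 2 * w) + h₂ * μ * a ^ 2 * w
      ≤ -(c₁ * (s * a ^ 2)) + 32 * μ / K * (a ^ 2 / s) + 8 * μ * K * a ^ 2 := by
    have e1 : h₂ * (μ * a ^ 2 * w) ≤ (2 * h₀ + 8) * (μ * a ^ 2 * w) := by gcongr
    have e2 : 2 * μ * a ^ 2 * h₀ * K⁻¹ ≤ 2 * μ * a ^ 2 * h₀ * w := by gcongr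
    have e3 : 2 * μ * a ^ 2 * K⁻¹ * (s / 8 - 16 / s) ≤ 2 * μ * a ^ 2 * K⁻¹ * h₀ := by gcongr
    have e4 : 8 * μ * a ^ 2 * w ≤ 8 * μ * a ^ 2 * K := by gcongr
    have e5 : 2 * μ * a ^ 2 * K⁻¹ * (s / 8 - 16 / s) =
        c₁ * (s * a ^ 2) - 32 * μ / K * (a ^ 2 / s) := by rw [hc₁]; field_simp; ring
    linarith
  have t2' : (8 * μ * K + 1) * a ^ 2 ≤ c₁ / 4 * (s * a ^ 2)
      + (8 * μ * K + 1) ^ 2 / 4 / (c₁ / 4) * (a ^ 2 / s) := by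
    have h := young (c := c₁ / 4) (s := s) (x := a) (y := (8 * μ * K + 1) * a)
      (Y := (8 * μ * K + 1) ^ 2 / 4 * (a ^ 2 / s)) (by positivity) hs0
      (by apply le_of_eq; field_simp)
    have e : (8 * μ * K + 1) ^ 2 / 4 * (a ^ 2 / s) / (c₁ / 4) =
      (8 * μ * K + 1) ^ 2 / 4 / (c₁ / 4) * (a ^ 2 / s) := by ring
    rw [e] at h; linarith
  have t3 : a * (12 * A * u ^ 2 * q₂) ≤ 1 * (1 * a ^ 2) + 36 * A ^ 2 * P ^ 2 * (u ^ 4 * Z) / 1 := by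
    refine young one_pos one_pos ?_
    have : 144 * A ^ 2 * u ^ 4 * q₂ ^ 2 ≤ 144 * A ^ 2 * u ^ 4 * (P ^ 2 * Z) := by gcongr
    linarith
  have t3' : (u * a) * (12 * A * u * q₁) ≤ 1 * (1 * (u * a) ^ 2)
      + 36 * A ^ 2 * P ^ 2 * (u ^ 2 * g ^ 2) / 1 := by
    refine young one_pos one_pos ?_
    have : 144 * A ^ 2 * u ^ 2 * q₁ ^ 2 ≤ 144 * A ^ 2 * u ^ 2 * (P ^ 2 * g ^ 2) := by gcongr
    linarith
  have t4 : a * (4 * h₀ * (q₁ + q₂)) ≤ c₁ / 8 * (s * a ^ 2) + 4 * P ^ 2 * g ^ 3 / (c₁ / 8) := by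
    refine young (by positivity) hs0 ?_
    calc (4 * h₀ * (q₁ + q₂)) ^ 2 = 16 * h₀ ^ 2 * (q₁ + q₂) ^ 2 := by ring
      _ ≤ 16 * h₀ ^ 2 * (P ^ 2 * s ^ 2) := by gcongr
      _ = 16 * P ^ 2 * s * (h₀ ^ 2 * s) := by ring
      _ ≤ 16 * P ^ 2 * s * g ^ 3 := by gcongr
      _ = _ := by ring
  have t11 : a * (-(h₂ * p)) ≤ c₁ / 8 * (s * a ^ 2) + 9 * P ^ 2 * g ^ 3 / (c₁ / 8) := by
    refine young (by positivity) hs0 ?_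
    calc (-(h₂ * p)) ^ 2 = h₂ ^ 2 * p ^ 2 := by ring
      _ ≤ h₂ ^ 2 * (P ^ 2 * s ^ 2) := by gcongr
      _ = P ^ 2 * s * (h₂ ^ 2 * s) := by ring
      _ ≤ P ^ 2 * s * (36 * g ^ 3) := by gcongr
      _ = _ := by ring
  have t5 : b * (-(2 * u * η * μ * a * w)) ≤ c₂ / 8 * (1 * b ^ 2)
      + 196 * μ ^ 2 * K ^ 2 * (u ^ 2 * a ^ 2) / (c₂ / 8) := by
    refine young (by positivity) one_pos ?_
    calc (-(2 * u * η * μ * a * w)) ^ 2 = 4 * u ^ 2 * μ ^ 2 * a ^ 2 * (η ^ 2 * w ^ 2) := by ring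
      _ ≤ 4 * u ^ 2 * μ ^ 2 * a ^ 2 * (196 * K ^ 2) := by gcongr
      _ = _ := by ring
  have t7 : b * (-(2 * k * κ * u * η * a * w)) ≤ c₂ / 8 * (1 * b ^ 2)
      + 196 * k ^ 2 * κ ^ 2 * K ^ 2 * (u ^ 2 * a ^ 2) / (c₂ / 8) := by
    refine young (by positivity) one_pos ?_
    calc (-(2 * k * κ * u * η * a * w)) ^ 2
        = 4 * u ^ 2 * k ^ 2 * κ ^ 2 * a ^ 2 * (η ^ 2 * w ^ 2) := by ring
      _ ≤ 4 * u ^ 2 * k ^ 2 * κ ^ 2 * a ^ 2 * (196 * K ^ 2) := by gcongr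
      _ = _ := by ring
  have t6 : b * (2 * u * η * (q₁ + q₂)) ≤ c₂ / 8 * (1 * b ^ 2)
      + 196 * P ^ 2 * (u ^ 2 * g ^ 2) / (c₂ / 8) := by
    refine young (by positivity) one_pos ?_
    calc (2 * u * η * (q₁ + q₂)) ^ 2 = 4 * u ^ 2 * η ^ 2 * (q₁ + q₂) ^ 2 := by ring
      _ ≤ 4 * u ^ 2 * η ^ 2 * (P ^ 2 * s ^ 2) := by gcongr
      _ = 4 * u ^ 2 * P ^ 2 * (η ^ 2 * s ^ 2) := by ring
      _ ≤ 4 * u ^ 2 * P ^ 2 * (196 * g ^ 2) := by gcongr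
      _ = _ := by ring
  have t9 : -(κ * h₂' * b ^ 2 * w) ≤ -(c₂ * b ^ 2) + 6 * κ * K * (b ^ 2 / s ^ 2) := by
    have e1 : κ * b ^ 2 * w * (2 / 3 - 6 / s ^ 2) ≤ κ * b ^ 2 * w * h₂' := by gcongr
    have e2 : κ * b ^ 2 * K⁻¹ * (2 / 3) ≤ κ * b ^ 2 * w * (2 / 3) := by gcongr
    have e3 : 6 * κ * w * (b ^ 2 / s ^ 2) ≤ 6 * κ * K * (b ^ 2 / s ^ 2) := by gcongr
    have e4 : κ * b ^ 2 * w * (2 / 3 - 6 / s ^ 2) =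
      κ * b ^ 2 * w * (2 / 3) - 6 * κ * w * (b ^ 2 / s ^ 2) := by ring
    have e5 : κ * b ^ 2 * K⁻¹ * (2 / 3) = c₂ * b ^ 2 := by rw [hc₂]; field_simp
    linarith
  have t10 : 0 ≤ k * κ * u ^ 2 * η₂ * b ^ 2 * w := by positivity
  have t12 : k * u ^ 2 * η * μ * a ^ 2 * w ≤ 14 * k * μ * K * (u ^ 2 * a ^ 2) := by
    calc k * u ^ 2 * η * μ * a ^ 2 * w = (k * u ^ 2 * μ * a ^ 2 * w) * η := by ring
      _ ≤ (k * u ^ 2 * μ * a ^ 2 * w) * 14 := by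
          gcongr; exact (le_abs_self _).trans hη
      _ ≤ (k * u ^ 2 * μ * a ^ 2 * K) * 14 := by gcongr
      _ = _ := by ring
  have t13 : (u * a) * (-(k * u * η * p)) ≤ 1 * (1 * (u * a) ^ 2)
      + 49 * k ^ 2 * P ^ 2 * (u ^ 2 * g ^ 2) / 1 := by
    refine young one_pos one_pos ?_
    calc (-(k * u * η * p)) ^ 2 = k ^ 2 * u ^ 2 * η ^ 2 * p ^ 2 := by ring
      _ ≤ k ^ 2 * u ^ 2 * η ^ 2 * (P ^ 2 * s ^ 2) := by gcongr
      _ = k ^ 2 * u ^ 2 * P ^ 2 * (η ^ 2 * s ^ 2) := by ring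
      _ ≤ k ^ 2 * u ^ 2 * P ^ 2 * (196 * g ^ 2) := by gcongr
      _ = _ := by ring
  have e : -(((12 * A * u ^ 2 + 2 * (2 * h₀)) * a + 2 * u * η * b) * (μ * a * w - (q₁ + q₂)))
      - k * ((2 * u * η * a + (cv * h₂' + u ^ 2 * η₂) * b) * (κ * b * w))
      + k * ((cv * h₂ + u ^ 2 * η) * ((μ * a * w - p) * a)) =
      -(12 * A * u ^ 2 * μ * a ^ 2 * w) + (-(4 * h₀ * μ * a ^ 2 * w) + h₂ * μ * a ^ 2 * w)
      + a * (12 * A * u ^ 2 * q₂) + (u * a) * (12 * A * u * q₁) + a * (4 * h₀ * (q₁ + q₂))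
      + a * (-(h₂ * p)) + b * (-(2 * u * η * μ * a * w)) + b * (-(2 * k * κ * u * η * a * w))
      + b * (2 * u * η * (q₁ + q₂)) + -(κ * h₂' * b ^ 2 * w) - k * κ * u ^ 2 * η₂ * b ^ 2 * w
      + k * u ^ 2 * η * μ * a ^ 2 * w + (u * a) * (-(k * u * η * p)) := by
    linear_combination (-κ * h₂' * b ^ 2 * w + h₂ * (μ * a * w - p) * a) * hkc
  rw [e]
  rw [hAμ] at t1
  have r2 : 0 ≤ c₂ * b ^ 2 := by positivity
  linear_combination t1 + t2 + t2' + t3 + t3' + t4 + t11 + t5 + t7 + t6 + t9 + t10 + t12 + t13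
    + 1 / 8 * r2

theorem ratio_abs {y : ℝ} (hy : 0 < y) : |(y - 1) / (y + 1)| ≤ 1 := by
  rw [abs_div, abs_of_pos (by positivity : 0 < y + 1), div_le_one (by positivity), abs_le]
  constructor <;> linarith

theorem ratio_sq {y : ℝ} (hy : 0 < y) : ((y - 1) / (y + 1)) ^ 2 ≤ 1 := by
  rw [← sq_abs]; exact pow_le_one₀ (abs_nonneg _) (ratio_abs hy)

theorem hp_abs {y : ℝ} (hy : 0 < y) :
    |2 * ((y - 1) ^ 3 * (4 * (y + 1) - 3 * (y - 1)) / (y + 1) ^ 4)| ≤ 14 * |(y - 1) / (y + 1)| ^ 3 := by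
  have h := ratio_abs hy
  have e : 2 * ((y - 1) ^ 3 * (4 * (y + 1) - 3 * (y - 1)) / (y + 1) ^ 4) =
      ((y - 1) / (y + 1)) ^ 3 * (2 * (4 - 3 * ((y - 1) / (y + 1)))) := by field_simp
  rw [e, abs_mul, abs_pow, mul_comm]
  gcongr
  rw [abs_le] at h ⊢
  constructor <;> linarith

/-- The density `c_v g² + A u⁴ + 2 u² (θ-1)⁴/(θ+1)³` with `g = (θ-1)²/(θ+1)`. -/
noncomputable def phi {cv : ℝ} (K A : ℝ) (hcv : 0 < cv) : Density K where
  V _ := 0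
  V' _ := 0
  Θ y := cv * ((y - 1) ^ 4 / (y + 1) ^ 2)
  Θ' y := cv * ((y - 1) ^ 3 * (2 * (y + 1) + 4) / (y + 1) ^ 3)
  Θ'' y := cv * ((y - 1) ^ 2 * (2 * (y + 1) ^ 2 + 8 * (y + 1) + 24) / (y + 1) ^ 4)
  h y := 2 * ((y - 1) ^ 4 / (y + 1) ^ 3)
  h' y := 2 * ((y - 1) ^ 3 * (4 * (y + 1) - 3 * (y - 1)) / (y + 1) ^ 4)
  h'' y := 2 * (48 * (y - 1) ^ 2 / (y + 1) ^ 5)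
  a₂ := 0
  a₄ := A
  C := 34 * cv + 96
  hC := by positivity
  dV y _ := hasDerivAt_const _ _
  dΘ y hy := by
    have h1 := ((hasDerivAt_id y).sub_const 1).fun_pow 4
    have h2 := ((hasDerivAt_id y).add_const 1).fun_pow 2
    have h3 := (h1.fun_div h2 (by simp only [id]; positivity)).const_mul cv
    refine h3.congr_deriv ?_
    simp only [id]
    field_simp
    ring
  dΘ' y hy := by
    have h1 := (((hasDerivAt_id y).sub_const 1).fun_pow 3).fun_mul
      ((((hasDerivAt_id y).add_const 1).const_mul 2).add_const 4)
    have h2 := ((hasDerivAt_id y).add_const 1).fun_pow 3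
    have h3 := (h1.fun_div h2 (by simp only [id]; positivity)).const_mul cv
    refine h3.congr_deriv ?_
    simp only [id]
    field_simp
    ring
  dh y hy := by
    have h1 := ((hasDerivAt_id y).sub_const 1).fun_pow 4
    have h2 := ((hasDerivAt_id y).add_const 1).fun_pow 3
    have h3 := (h1.fun_div h2 (by simp only [id]; positivity)).const_mul 2
    refine h3.congr_deriv ?_
    simp only [id]
    field_simp
    ring
  dh' y hy := by
    have h1 := (((hasDerivAt_id y).sub_const 1).fun_pow 3).fun_mul
      ((((hasDerivAt_id y).add_const 1).const_mul 4).fun_sub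
        (((hasDerivAt_id y).sub_const 1).const_mul 3))
    have h2 := ((hasDerivAt_id y).add_const 1).fun_pow 4
    have h3 := (h1.fun_div h2 (by simp only [id]; positivity)).const_mul 2
    refine h3.congr_deriv ?_
    simp only [id]
    field_simp
    ring
  mV := by fun_prop
  mV' := by fun_prop
  mΘ := by fun_prop
  mΘ' := by fun_prop
  mΘ'' := by fun_prop
  mh := by fun_prop
  mh' := by fun_prop
  mh'' := by fun_prop
  bV y _ _ := by rw [abs_zero]; positivity
  bV' y _ _ := by rw [abs_zero]; positivity
  bΘ y hy := by
    have h := ratio_sq hy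
    rw [abs_of_nonneg (by positivity)]
    have e : cv * ((y - 1) ^ 4 / (y + 1) ^ 2) = cv * ((y - 1) / (y + 1)) ^ 2 * (y - 1) ^ 2 := by
      field_simp
    rw [e]
    gcongr
    nlinarith
  bΘ' y hy := by
    have h := ratio_sq hy
    have e : cv * ((y - 1) ^ 3 * (2 * (y + 1) + 4) / (y + 1) ^ 3) =
        cv * (((y - 1) / (y + 1)) ^ 2 * (2 + 4 / (y + 1))) * (y - 1) := by field_simp
    rw [e, abs_mul, abs_of_nonneg (by positivity)]
    gcongr
    have h2 : 4 / (y + 1) ≤ 4 := div_le_self (by norm_num) (by linarith)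
    have h3 : ((y - 1) / (y + 1)) ^ 2 * (2 + 4 / (y + 1)) ≤ 1 * (2 + 4) := by gcongr
    nlinarith
  bΘ'' y hy := by
    have h := ratio_sq hy
    rw [abs_of_nonneg (by positivity)]
    have e : cv * ((y - 1) ^ 2 * (2 * (y + 1) ^ 2 + 8 * (y + 1) + 24) / (y + 1) ^ 4) =
        cv * (((y - 1) / (y + 1)) ^ 2 * (2 + 8 / (y + 1) + 24 / (y + 1) ^ 2)) := by field_simp
    rw [e]
    have h2 : 8 / (y + 1) ≤ 8 := div_le_self (by norm_num) (by linarith)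
    have h3 : 24 / (y + 1) ^ 2 ≤ 24 := div_le_self (by norm_num) (one_le_pow₀ (by linarith))
    have h4 : ((y - 1) / (y + 1)) ^ 2 * (2 + 8 / (y + 1) + 24 / (y + 1) ^ 2) ≤ 1 * (2 + 8 + 24) := by
      gcongr
    nlinarith
  bh y hy := by
    have h := ratio_sq hy
    rw [abs_of_nonneg (by positivity)]
    have e : 2 * ((y - 1) ^ 4 / (y + 1) ^ 3) =
        2 * ((((y - 1) / (y + 1)) ^ 2) * (((y - 1) / (y + 1)) ^ 2)) * (1 + y) := by
      field_simp; ring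
    rw [e]
    gcongr
    have h3 : (((y - 1) / (y + 1)) ^ 2) * (((y - 1) / (y + 1)) ^ 2) ≤ 1 * 1 := by gcongr
    linarith
  bh' y hy := by
    have h := pow_le_one₀ (n := 3) (abs_nonneg _) (ratio_abs hy)
    refine (hp_abs hy).trans ?_
    linarith
  bh'' y hy := by
    have h := ratio_sq hy
    rw [abs_of_nonneg (by positivity)]
    have e : 2 * (48 * (y - 1) ^ 2 / (y + 1) ^ 5) =
        96 * (((y - 1) / (y + 1)) ^ 2 * (1 / (y + 1) ^ 3)) := by field_simp; ring
    rw [e]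
    have h3 : 1 / (y + 1) ^ 3 ≤ 1 := div_le_self (by norm_num) (one_le_pow₀ (by linarith))
    have h4 : ((y - 1) / (y + 1)) ^ 2 * (1 / (y + 1) ^ 3) ≤ 1 * 1 := by gcongr
    linarith

/-- The coefficient of `u⁴` in the second density. -/
noncomputable def coefA (μ κ cv K : ℝ) : ℝ :=
  K / (12 * μ) * (3 + 196 * μ ^ 2 * K ^ 2 / (2 * κ / (3 * K) / 8)
      + 196 * cv⁻¹ ^ 2 * κ ^ 2 * K ^ 2 / (2 * κ / (3 * K) / 8) + 14 * cv⁻¹ * μ * K)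

namespace Flow

variable {μ κ R cv K T : ℝ} (S : Flow μ κ R cv K T)

theorem coefA_pos (hμ : 0 < μ) (hκ : 0 < κ) (hcv : 0 < cv) (hK : 0 < K) : 0 < coefA μ κ cv K := by
  unfold coefA; positivity

/-- The constant in the pointwise bound on the second production. -/
noncomputable def ptC (μ κ R cv K : ℝ) : ℝ :=
  (32 * μ / K + (8 * μ * K + 1) ^ 2 / 4 / (μ / (4 * K) / 4)) + 6 * κ * K
  + (4 * (R * K) ^ 2 / (μ / (4 * K) / 8) + 9 * (R * K) ^ 2 / (μ / (4 * K) / 8))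
  + (196 * (R * K) ^ 2 / (2 * κ / (3 * K) / 8) + 49 * cv⁻¹ ^ 2 * (R * K) ^ 2
    + 36 * coefA μ κ cv K ^ 2 * (R * K) ^ 2)
  + 8 * (36 * coefA μ κ cv K ^ 2 * (R * K) ^ 2)

/-- The coefficient of the dissipation in the pointwise bound on the second production. -/
noncomputable def ptc (μ κ K : ℝ) : ℝ := min 1 (min (μ / (4 * K) / 2) (2 * κ / (3 * K) / 2))

set_option maxHeartbeats 2000000 in
/-- The production of the second density, with `g = (θ-1)²/(θ+1)`. -/
theorem prodn_phi (x t : ℝ) :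
    S.prodn (phi K (coefA μ κ cv K) S.hcv) x t ≤
      -(ptc μ κ K * ((1 + S.θ x t + S.u x t ^ 2) * S.ux x t ^ 2 + S.θx x t ^ 2))
      + ptC μ κ R cv K * (S.ux x t ^ 2 / (S.θ x t + 1) + S.θx x t ^ 2 / (S.θ x t + 1) ^ 2
        + ((S.θ x t - 1) ^ 2 / (S.θ x t + 1)) ^ 3
        + S.u x t ^ 4 * ((S.θ x t - 1) ^ 2 / (S.θ x t + 1))
        + S.u x t ^ 4 * (S.v x t - 1) ^ 2) := by
  have hv := S.v_pos x t
  have hvK := S.v_ub x t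
  have hvl := S.v_lb x t
  have hθ := S.θ_pos x t
  have hK := S.hK0
  have hcv := S.hcv
  have hμ := S.hμ
  have hκ := S.hκ
  have hR := S.hR
  have hK1 := S.hK
  have hA := coefA_pos hμ hκ hcv hK
  simp only [prodn, phi, pux, pθx, pθ, sg]
  generalize S.v x t = v at *
  generalize S.θ x t = θ at *
  generalize S.u x t = u at *
  generalize S.ux x t = a at *
  generalize S.θx x t = b at *
  have hAμ : 12 * coefA μ κ cv K * μ / K = 3 + 196 * μ ^ 2 * K ^ 2 / (2 * κ / (3 * K) / 8)
      + 196 * cv⁻¹ ^ 2 * κ ^ 2 * K ^ 2 / (2 * κ / (3 * K) / 8) + 14 * cv⁻¹ * μ * K := by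
    unfold coefA; field_simp
  have hvi : v⁻¹ ≤ K := inv_le_of_inv_le₀ hK hvl
  have hr := ratio_abs hθ
  have hr2 := ratio_sq hθ
  have hηb := hp_abs hθ
  have hg : 0 ≤ (θ - 1) ^ 2 / (θ + 1) := by positivity
  have hRw : R * v⁻¹ ≤ R * K := by gcongr
  have hg2 : ((θ - 1) / (θ + 1)) ^ 2 ≤ (θ - 1) ^ 2 / (θ + 1) := by
    rw [div_pow]
    exact div_le_div_of_nonneg_left (sq_nonneg _) (by positivity) (by nlinarith)
  have key := absorb (μ := μ) (κ := κ) (cv := cv) (K := K) (P := R * K) (A := coefA μ κ cv K)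
    (c₁ := μ / (4 * K)) (c₂ := 2 * κ / (3 * K)) (w := v⁻¹) (p := R * θ * v⁻¹)
    (q₁ := R * v⁻¹ * ((θ - 1) ^ 2 / (θ + 1)))
    (q₂ := R * v⁻¹ * (2 * ((θ - 1) / (θ + 1)) - (v - 1)))
    (h₀ := (θ - 1) ^ 4 / (θ + 1) ^ 3)
    (h₂ := (θ - 1) ^ 3 * (2 * (θ + 1) + 4) / (θ + 1) ^ 3)
    (h₂' := (θ - 1) ^ 2 * (2 * (θ + 1) ^ 2 + 8 * (θ + 1) + 24) / (θ + 1) ^ 4)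
    (η := 2 * ((θ - 1) ^ 3 * (4 * (θ + 1) - 3 * (θ - 1)) / (θ + 1) ^ 4))
    (η₂ := 2 * (48 * (θ - 1) ^ 2 / (θ + 1) ^ 5)) (s := θ + 1) (g := (θ - 1) ^ 2 / (θ + 1))
    (a := a) (b := b) (u := u) (Z := 8 * ((θ - 1) ^ 2 / (θ + 1)) + 2 * (v - 1) ^ 2)
    hμ hκ hcv hK1 hA rfl rfl hAμ (by gcongr) hvi (by linarith)
    (by
      rw [← mul_pow]
      calc (R * θ * v⁻¹) ^ 2 = (R * v⁻¹ * θ) ^ 2 := by ring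
        _ ≤ (R * K * (θ + 1)) ^ 2 := by gcongr; linarith)
    (by
      have e : R * v⁻¹ * ((θ - 1) ^ 2 / (θ + 1)) + R * v⁻¹ * (2 * ((θ - 1) / (θ + 1)) - (v - 1))
          = R * v⁻¹ * θ - R := by field_simp; ring
      rw [e, ← mul_pow]
      have h1 : R * v⁻¹ * θ ≤ R * K * θ := by gcongr
      have h2 : 0 ≤ R * v⁻¹ * θ := by positivity
      have h3 : R ≤ R * K := by nlinarith
      have h4 : 0 ≤ R * K * θ := by positivity
      apply sq_le_sq' <;> nlinarith)
    (by
      rw [← mul_pow]; gcongr)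
    (by
      have h1 : (2 * ((θ - 1) / (θ + 1)) - (v - 1)) ^ 2 ≤
          8 * ((θ - 1) ^ 2 / (θ + 1)) + 2 * (v - 1) ^ 2 := by
        nlinarith [sq_nonneg (2 * ((θ - 1) / (θ + 1)) + (v - 1))]
      rw [mul_pow]
      gcongr)
    (by
      have := pow_le_one₀ (n := 3) (abs_nonneg _) hr
      linarith)
    (by
      calc _ ≤ 14 * |(θ - 1) / (θ + 1)| ^ 3 * (θ + 1) := by gcongr
        _ = 14 * (((θ - 1) / (θ + 1)) ^ 2 * (θ + 1)) * |(θ - 1) / (θ + 1)| := by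
            rw [← sq_abs ((θ - 1) / (θ + 1))]; ring
        _ ≤ 14 * (((θ - 1) / (θ + 1)) ^ 2 * (θ + 1)) * 1 := by gcongr
        _ = _ := by field_simp)
    (by positivity) (by positivity)
    (by
      have e : (θ - 1) ^ 4 / (θ + 1) ^ 3 - ((θ + 1) / 8 - 16 / (θ + 1)) =
        ((θ - 1) ^ 4 - (θ + 1) ^ 4 / 8 + 16 * (θ + 1) ^ 2) / (θ + 1) ^ 3 := by field_simp; ring
      have : 0 ≤ ((θ - 1) ^ 4 - (θ + 1) ^ 4 / 8 + 16 * (θ + 1) ^ 2) / (θ + 1) ^ 3 := by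
        apply div_nonneg _ (by positivity)
        nlinarith [sq_nonneg (θ ^ 2 - 3 * θ), sq_nonneg θ]
      linarith)
    (by
      calc ((θ - 1) ^ 4 / (θ + 1) ^ 3) ^ 2 * (θ + 1)
          = ((θ - 1) / (θ + 1)) ^ 2 * ((θ - 1) ^ 2 / (θ + 1)) ^ 3 := by field_simp
        _ ≤ 1 * ((θ - 1) ^ 2 / (θ + 1)) ^ 3 := by gcongr
        _ = _ := one_mul _)
    (by
      have e : (θ - 1) ^ 3 * (2 * (θ + 1) + 4) / (θ + 1) ^ 3 =
        2 * ((θ - 1) ^ 4 / (θ + 1) ^ 3) + 8 * ((θ - 1) / (θ + 1)) ^ 3 := by field_simp; ring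
      have h3 := pow_le_one₀ (n := 3) (abs_nonneg _) hr
      rw [← abs_pow] at h3
      have := (le_abs_self _).trans h3
      rw [e]; linarith)
    (by
      have e : ((θ - 1) ^ 3 * (2 * (θ + 1) + 4) / (θ + 1) ^ 3) ^ 2 * (θ + 1)
          = ((θ - 1) ^ 2 / (θ + 1)) ^ 3 * (2 + 4 / (θ + 1)) ^ 2 := by field_simp
      have h4 : 4 / (θ + 1) ≤ 4 := div_le_self (by norm_num) (by linarith)
      have h5 : (2 + 4 / (θ + 1)) ^ 2 ≤ (2 + 4) ^ 2 := by gcongr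
      rw [e]
      calc _ ≤ ((θ - 1) ^ 2 / (θ + 1)) ^ 3 * (2 + 4) ^ 2 := by gcongr
        _ = _ := by ring)
    (by
      have e : (θ - 1) ^ 2 * (2 * (θ + 1) ^ 2 + 8 * (θ + 1) + 24) / (θ + 1) ^ 4
          - (2 / 3 - 6 / (θ + 1) ^ 2) =
          ((θ - 1) ^ 2 * (2 * (θ + 1) ^ 2 + 8 * (θ + 1) + 24) - 2 / 3 * (θ + 1) ^ 4
            + 6 * (θ + 1) ^ 2) / (θ + 1) ^ 4 := by field_simp; ring
      have : 0 ≤ ((θ - 1) ^ 2 * (2 * (θ + 1) ^ 2 + 8 * (θ + 1) + 24) - 2 / 3 * (θ + 1) ^ 4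
            + 6 * (θ + 1) ^ 2) / (θ + 1) ^ 4 := by
        apply div_nonneg _ (by positivity)
        nlinarith [sq_nonneg ((θ - 1) * (θ - 1 + 4)), sq_nonneg (θ - 1), sq_nonneg θ]
      linarith)
  have e : (0 : ℝ) * a - ((2 * 0 + 12 * coefA μ κ cv K * u ^ 2 + 2 * (2 * ((θ - 1) ^ 4 / (θ + 1) ^ 3))) * a
      + 2 * u * (2 * ((θ - 1) ^ 3 * (4 * (θ + 1) - 3 * (θ - 1)) / (θ + 1) ^ 4)) * b)
        * (μ * a / v - R * θ / v + R) =
      -(((12 * coefA μ κ cv K * u ^ 2 + 2 * (2 * ((θ - 1) ^ 4 / (θ + 1) ^ 3))) * a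
      + 2 * u * (2 * ((θ - 1) ^ 3 * (4 * (θ + 1) - 3 * (θ - 1)) / (θ + 1) ^ 4)) * b)
        * (μ * a * v⁻¹ - (R * v⁻¹ * ((θ - 1) ^ 2 / (θ + 1)) +
          R * v⁻¹ * (2 * ((θ - 1) / (θ + 1)) - (v - 1))))) := by
    have e2 : R * v⁻¹ * ((θ - 1) ^ 2 / (θ + 1)) + R * v⁻¹ * (2 * ((θ - 1) / (θ + 1)) - (v - 1))
          = R * θ / v - R := by field_simp; ring
    rw [e2]; ring
  rw [e, div_eq_mul_inv (μ * a), div_eq_mul_inv (κ * b), div_eq_mul_inv (R * θ)]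
  refine key.trans ?_
  unfold ptC ptc
  generalize hX : (θ - 1) ^ 2 / (θ + 1) = g at *
  have hA2 : 0 ≤ 36 * coefA μ κ cv K ^ 2 * (R * K) ^ 2 := by positivity
  have m1 := min_le_left 1 (min (μ / (4 * K) / 2) (2 * κ / (3 * K) / 2))
  have m2 := (min_le_right 1 (min (μ / (4 * K) / 2) (2 * κ / (3 * K) / 2))).trans (min_le_left _ _)
  have m3 := (min_le_right 1 (min (μ / (4 * K) / 2) (2 * κ / (3 * K) / 2))).trans (min_le_right _ _)
  generalize min 1 (min (μ / (4 * K) / 2) (2 * κ / (3 * K) / 2)) = c at *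
  have C1 : 0 ≤ 32 * μ / K + (8 * μ * K + 1) ^ 2 / 4 / (μ / (4 * K) / 4) := by positivity
  have C2 : 0 ≤ 6 * κ * K := by positivity
  have C3 : 0 ≤ 4 * (R * K) ^ 2 / (μ / (4 * K) / 8) + 9 * (R * K) ^ 2 / (μ / (4 * K) / 8) := by
    positivity
  have C4 : 0 ≤ 196 * (R * K) ^ 2 / (2 * κ / (3 * K) / 8) + 49 * cv⁻¹ ^ 2 * (R * K) ^ 2
    + 36 * coefA μ κ cv K ^ 2 * (R * K) ^ 2 := by positivity
  clear key e hAμ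
  generalize 32 * μ / K + (8 * μ * K + 1) ^ 2 / 4 / (μ / (4 * K) / 4) = C₁ at *
  generalize 6 * κ * K = C₂ at *
  generalize 4 * (R * K) ^ 2 / (μ / (4 * K) / 8) + 9 * (R * K) ^ 2 / (μ / (4 * K) / 8) = C₃ at *
  generalize 196 * (R * K) ^ 2 / (2 * κ / (3 * K) / 8) + 49 * cv⁻¹ ^ 2 * (R * K) ^ 2
    + 36 * coefA μ κ cv K ^ 2 * (R * K) ^ 2 = C₄ at *
  generalize 36 * coefA μ κ cv K ^ 2 * (R * K) ^ 2 = C₅ at *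
  have X1 : 0 ≤ a ^ 2 / (θ + 1) := by positivity
  have X2 : 0 ≤ b ^ 2 / (θ + 1) ^ 2 := by positivity
  have X3 : 0 ≤ g ^ 3 := by positivity
  have X4 : 0 ≤ u ^ 4 * g := by positivity
  have X5 : 0 ≤ u ^ 4 * (v - 1) ^ 2 := by positivity
  have X6 : 2 * (u ^ 2 * g ^ 2) ≤ g ^ 3 + u ^ 4 * g := by
    nlinarith [mul_nonneg hg (sq_nonneg (g - u ^ 2))]
  have Y1 : c * ((θ + 1) * a ^ 2) ≤ μ / (4 * K) / 2 * ((θ + 1) * a ^ 2) := by gcongr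
  have Y2 : c * b ^ 2 ≤ 2 * κ / (3 * K) / 2 * b ^ 2 := by gcongr
  have Y3 : c * (u ^ 2 * a ^ 2) ≤ 1 * (u ^ 2 * a ^ 2) := by gcongr
  have Z4 : C₄ * (u ^ 2 * g ^ 2) ≤ C₄ * (g ^ 3 + u ^ 4 * g) := by
    gcongr; nlinarith [mul_nonneg (sq_nonneg u) (sq_nonneg g)]
  generalize a ^ 2 / (θ + 1) = x₁ at *
  generalize b ^ 2 / (θ + 1) ^ 2 = x₂ at *
  linarith [mul_nonneg C1 X2, mul_nonneg C1 X3, mul_nonneg C1 X4, mul_nonneg C1 X5,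
    mul_nonneg C2 X1, mul_nonneg C2 X3, mul_nonneg C2 X4, mul_nonneg C2 X5,
    mul_nonneg C3 X1, mul_nonneg C3 X2, mul_nonneg C3 X4, mul_nonneg C3 X5,
    mul_nonneg C4 X1, mul_nonneg C4 X2, mul_nonneg C4 X5,
    mul_nonneg hA2 X1, mul_nonneg hA2 X2, mul_nonneg hA2 X3, mul_nonneg hA2 X4, mul_nonneg hA2 X5]

end Flow

namespace Flow

/-! ### The second dissipation estimate -/

variable {μ κ R cv K T : ℝ} (S : Flow μ κ R cv K T)

/-- The dissipation to be controlled. -/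
noncomputable def diss (x t : ℝ) : ℝ :=
  (1 + S.θ x t + S.u x t ^ 2) * S.ux x t ^ 2 + S.θx x t ^ 2

/-- The dissipation controlled by the basic energy estimate. -/
noncomputable def ctl (x t : ℝ) : ℝ :=
  S.ux x t ^ 2 / (S.θ x t + 1) + S.θx x t ^ 2 / (S.θ x t + 1) ^ 2

theorem diss_nonneg (x t : ℝ) : 0 ≤ S.diss x t := by
  have := S.θ_pos x t
  unfold diss; positivity

theorem ctl_nonneg (x t : ℝ) : 0 ≤ S.ctl x t := by
  have := S.θ_pos x t
  unfold ctl; positivity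

theorem int_diss : Integrable (fun p : ℝ × ℝ => S.diss p.1 p.2) (slab T) :=
  ((((BM.const 1).add S.bθ).add ((S.bu.mul S.bu))).integrable S.Pux.integrable_sq).add
    S.Pθx.integrable_sq |>.congr (Eventually.of_forall fun p => by
      simp only [diss, Pi.add_apply]; ring)

theorem int_ctl : Integrable (fun p : ℝ × ℝ => S.ctl p.1 p.2) (slab T) :=
  S.int_uxθ.fun_add S.int_θxθ

theorem int_θxs (t : ℝ) : Integrable fun x => S.θx x t ^ 2 / (S.θ x t + 1) := by
  have mθ : Measurable fun x => S.θ x t := S.mθ.comp (measurable_id.prodMk measurable_const)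
  have mθx : Measurable fun x => S.θx x t := S.mθx.comp (measurable_id.prodMk measurable_const)
  refine (S.Lθx t).integrable_sq.mono'
    (by fun_prop : Measurable _).aestronglyMeasurable (Eventually.of_forall fun x => ?_)
  have := S.θ_pos x t
  rw [Real.norm_eq_abs, abs_of_nonneg (by positivity)]
  exact div_le_self (sq_nonneg _) (by linarith)

/-- A sup bound for `g = (θ-1)²/(θ+1)`: since `g'(θ)² (θ+1) ≤ 9 g`, the Cauchy–Schwarz
inequality bounds `∫ |g_x|` by `∫ g` and `∫ θ_x²/(θ+1)`. -/
theorem g_sup (x t : ℝ) : ((S.θ x t - 1) ^ 2 / (S.θ x t + 1)) ^ 2 ≤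
    9 * ((∫ y, (S.θ y t - 1) ^ 2 / (S.θ y t + 1)) * ∫ y, S.θx y t ^ 2 / (S.θ y t + 1)) := by
  have mθ : Measurable fun x => S.θ x t := S.mθ.comp (measurable_id.prodMk measurable_const)
  have mθx : Measurable fun x => S.θx x t := S.mθx.comp (measurable_id.prodMk measurable_const)
  set f : ℝ → ℝ := fun y => (S.θ y t - 1) * (S.θ y t + 3) / (S.θ y t + 1) ^ 2 * √(S.θ y t + 1)
    with hf
  set k : ℝ → ℝ := fun y => S.θx y t / √(S.θ y t + 1) with hk
  have mf : Measurable f := by fun_prop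
  have mk : Measurable k := by fun_prop
  have ef : ∀ y, f y ^ 2 ≤ 9 * ((S.θ y t - 1) ^ 2 / (S.θ y t + 1)) := by
    intro y
    have hθ := S.θ_pos y t
    have e : f y ^ 2 = ((S.θ y t + 3) / (S.θ y t + 1)) ^ 2 *
        ((S.θ y t - 1) ^ 2 / (S.θ y t + 1)) := by
      simp only [hf]
      rw [mul_pow, Real.sq_sqrt (by positivity)]
      field_simp
    have h3 : (S.θ y t + 3) / (S.θ y t + 1) ≤ 3 := by
      rw [div_le_iff₀ (by positivity)]; linarith
    rw [e]
    gcongr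
    calc _ ≤ (3 : ℝ) ^ 2 := by gcongr
      _ = 9 := by norm_num
  have ek : ∀ y, k y ^ 2 = S.θx y t ^ 2 / (S.θ y t + 1) := by
    intro y
    have hθ := S.θ_pos y t
    simp only [hk]
    rw [div_pow, Real.sq_sqrt (by positivity)]
  have if2 : Integrable fun y => f y ^ 2 :=
    ((S.int_g t).const_mul 9).mono' (mf.pow_const 2).aestronglyMeasurable
      (Eventually.of_forall fun y => by
        rw [Real.norm_eq_abs, abs_of_nonneg (sq_nonneg _)]; exact ef y)
  have Lf : MemLp f 2 volume := (memLp_two_iff_integrable_sq mf.aestronglyMeasurable).2 if2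
  have Lk : MemLp k 2 volume := (memLp_two_iff_integrable_sq mk.aestronglyMeasurable).2
    ((S.int_θxs t).congr (Eventually.of_forall fun y => (ek y).symm))
  have hd : ∀ y, HasDerivAt (fun y => (S.θ y t - 1) ^ 2 / (S.θ y t + 1)) (f y * k y) y := by
    intro y
    have hθ := S.θ_pos y t
    have h := (((S.dθ y t).sub_const 1).fun_pow 2).fun_div ((S.dθ y t).add_const 1)
      (by positivity)
    refine h.congr_deriv ?_
    have hsq : 0 < √(S.θ y t + 1) := Real.sqrt_pos.2 (by positivity)
    simp only [hf, hk]
    field_simp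
    ring
  have h1 := abs_le_integral_deriv hd (S.int_g t) (mul_int Lf Lk) x
  have h2 := cauchy_schwarz Lf Lk
  have h3 : ∫ y, f y ^ 2 ≤ 9 * ∫ y, (S.θ y t - 1) ^ 2 / (S.θ y t + 1) := by
    rw [← integral_const_mul]
    exact integral_mono if2 ((S.int_g t).const_mul 9) ef
  have h4 : ∫ y, k y ^ 2 = ∫ y, S.θx y t ^ 2 / (S.θ y t + 1) := by simp_rw [ek]
  have h5 : 0 ≤ ∫ y, S.θx y t ^ 2 / (S.θ y t + 1) :=
    integral_nonneg fun y => by have := S.θ_pos y t; positivity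
  rw [h4] at h2
  calc _ = |(S.θ x t - 1) ^ 2 / (S.θ x t + 1)| ^ 2 := (sq_abs _).symm
    _ ≤ (∫ y, |f y * k y|) ^ 2 := by gcongr
    _ ≤ _ := h2
    _ ≤ (9 * ∫ y, (S.θ y t - 1) ^ 2 / (S.θ y t + 1)) * ∫ y, S.θx y t ^ 2 / (S.θ y t + 1) := by
        gcongr
    _ = _ := by ring

/-- The weight used to interpolate between the two dissipations. -/
noncomputable def del (c C E : ℝ) : ℝ := c / (18 * (C * E ^ 2 + 1))

/-- The second production, integrated in space at a fixed time. -/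
theorem space_bound {t E : ℝ} (hE : 0 ≤ E) (h1 : ∫ x, S.u x t ^ 2 ≤ E)
    (h2 : ∫ x, (S.v x t - 1) ^ 2 ≤ E) (h3 : ∫ x, (S.θ x t - 1) ^ 2 / (S.θ x t + 1) ≤ E)
    (ip : Integrable fun x => S.prodn (phi K (coefA μ κ cv K) S.hcv) x t)
    (id : Integrable fun x => S.diss x t) (ic : Integrable fun x => S.ctl x t)
    {c C : ℝ} (hc : 0 < c) (hC : 0 < C) (hcd : c = ptc μ κ K) (hCd : C = ptC μ κ R cv K) :
    ∫ x, S.prodn (phi K (coefA μ κ cv K) S.hcv) x t ≤ -(c / 2 * ∫ x, S.diss x t)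
      + (C + 9 * C * E ^ 2 / (4 * del c C E)) * ∫ x, S.ctl x t := by
  set X := ∫ x, S.ux x t ^ 2 with hX
  set Q := ∫ x, S.θx x t ^ 2 / (S.θ x t + 1) with hQ
  set W := ∫ x, S.diss x t with hW
  set N := ∫ x, S.ctl x t with hN
  have hX0 : 0 ≤ X := integral_nonneg fun x => sq_nonneg _
  have hQ0 : 0 ≤ Q := integral_nonneg fun y => by have := S.θ_pos y t; positivity
  have hW0 : 0 ≤ W := integral_nonneg fun x => S.diss_nonneg x t
  have hN0 : 0 ≤ N := integral_nonneg fun x => S.ctl_nonneg x t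
  have hdel : 0 < del c C E := by unfold del; positivity
  have su : ∀ x, S.u x t ^ 4 ≤ 4 * E * X := fun x => by
    have h := agmon (fun x => S.du x t) (S.Lu t) (S.Lux t) x
    calc S.u x t ^ 4 = (S.u x t ^ 2) ^ 2 := by ring
      _ ≤ _ := h
      _ ≤ 4 * (E * X) := by gcongr
      _ = _ := by ring
  have sg : ∀ x, ((S.θ x t - 1) ^ 2 / (S.θ x t + 1)) ^ 2 ≤ 9 * E * Q := fun x => by
    refine (S.g_sup x t).trans ?_
    calc _ ≤ 9 * (E * Q) := by gcongr
      _ = _ := by ring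
  have i1 := (id.const_mul c).neg
  have i2 := ic.const_mul C
  have i3 := (S.int_g t).const_mul (C * (9 * E * Q + 4 * E * X))
  have i4 := (S.Lv t).integrable_sq.const_mul (C * (4 * E * X))
  have step : ∫ x, S.prodn (phi K (coefA μ κ cv K) S.hcv) x t ≤
      -(c * W) + C * N + C * (9 * E * Q + 4 * E * X) * E + C * (4 * E * X) * E := by
    calc _ ≤ ∫ x, ((-(c * S.diss x t) + C * S.ctl x t)
          + C * (9 * E * Q + 4 * E * X) * ((S.θ x t - 1) ^ 2 / (S.θ x t + 1)))
          + C * (4 * E * X) * (S.v x t - 1) ^ 2 := by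
          refine integral_mono ip (((i1.add i2).add i3).add i4) fun x => ?_
          have h := S.prodn_phi x t
          rw [← hcd, ← hCd] at h
          have hθ := S.θ_pos x t
          have hg : 0 ≤ (S.θ x t - 1) ^ 2 / (S.θ x t + 1) := by positivity
          have a1 := mul_le_mul_of_nonneg_right (sg x) hg
          have a2 := mul_le_mul_of_nonneg_right (su x) hg
          have a3 := mul_le_mul_of_nonneg_right (su x) (sq_nonneg (S.v x t - 1))
          have a4 := mul_le_mul_of_nonneg_left (add_le_add (add_le_add a1 a2) a3) hC.le
          unfold diss ctl
          simp only
          nlinarith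
      _ = -(c * W) + C * N
          + C * (9 * E * Q + 4 * E * X) * (∫ x, (S.θ x t - 1) ^ 2 / (S.θ x t + 1))
          + C * (4 * E * X) * ∫ x, (S.v x t - 1) ^ 2 := by
          have j1 : Integrable fun x => -(c * S.diss x t) := i1
          rw [integral_add ((j1.fun_add i2).fun_add i3) i4, integral_add (j1.fun_add i2) i3,
            integral_add j1 i2, integral_neg, integral_const_mul, integral_const_mul,
            integral_const_mul, integral_const_mul]
      _ ≤ _ := by gcongr
  have inter : X + Q ≤ del c C E * W + N / (4 * del c C E) := by
    have k1 := id.const_mul (del c C E)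
    have k2 := ic.div_const (4 * del c C E)
    rw [hX, hQ, hW, hN, ← integral_add (S.Lux t).integrable_sq (S.int_θxs t),
      ← integral_const_mul, ← integral_div, ← integral_add k1 k2]
    refine integral_mono ((S.Lux t).integrable_sq.fun_add (S.int_θxs t)) (k1.fun_add k2)
      fun x => ?_
    have hθ := S.θ_pos x t
    have hs : 0 < S.θ x t + 1 := by positivity
    have y1 := young (c := del c C E) (s := S.θ x t + 1) (x := S.ux x t) (y := S.ux x t)
      (Y := S.ux x t ^ 2 / (S.θ x t + 1) / 4) hdel hs (by apply le_of_eq; field_simp)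
    have y2 := young (c := del c C E) (s := 1) (x := S.θx x t) (y := S.θx x t / (S.θ x t + 1))
      (Y := S.θx x t ^ 2 / (S.θ x t + 1) ^ 2 / 4) hdel one_pos (by apply le_of_eq; field_simp)
    have y3 : 0 ≤ del c C E * (S.u x t ^ 2 * S.ux x t ^ 2) := by positivity
    simp only [diss, ctl]
    have e : (S.ux x t ^ 2 / (S.θ x t + 1) + S.θx x t ^ 2 / (S.θ x t + 1) ^ 2) / (4 * del c C E)
      = S.ux x t ^ 2 / (S.θ x t + 1) / 4 / del c C E
        + S.θx x t ^ 2 / (S.θ x t + 1) ^ 2 / 4 / del c C E := by field_simp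
    have e2 : S.θx x t ^ 2 / (S.θ x t + 1) = S.θx x t * (S.θx x t / (S.θ x t + 1)) := by ring
    rw [e, e2]
    linarith
  have hd1 : 9 * C * E ^ 2 * del c C E ≤ c / 2 := by
    have e : c / 2 = 9 * (C * E ^ 2 + 1) * del c C E := by unfold del; field_simp; norm_num
    rw [e]; nlinarith
  calc _ ≤ _ := step
    _ ≤ -(c * W) + C * N + 9 * C * E ^ 2 * (X + Q) := by
        have : 0 ≤ C * E ^ 2 * X := by positivity
        linarith
    _ ≤ -(c * W) + C * N + 9 * C * E ^ 2 * (del c C E * W + N / (4 * del c C E)) := by gcongr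
    _ = -(c * W) + (9 * C * E ^ 2 * del c C E) * W
        + (C + 9 * C * E ^ 2 / (4 * del c C E)) * N := by ring
    _ ≤ -(c * W) + c / 2 * W + (C + 9 * C * E ^ 2 / (4 * del c C E)) * N := by gcongr
    _ = _ := by ring

/-- The bound on the total second density and its dissipation. -/
noncomputable def secC (μ κ R cv K M m : ℝ) : ℝ :=
  (cv + 4 * M ^ 2) * M ^ 2 + coefA μ κ cv K * (2 * M ^ 2) * M ^ 2
  + (ptC μ κ R cv K + 9 * ptC μ κ R cv K * enC μ κ R cv K M m ^ 2 /
      (4 * del (ptc μ κ K) (ptC μ κ R cv K) (enC μ κ R cv K M m))) * (2 * enC μ κ R cv K M m)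

/-- The final constant. -/
noncomputable def finC (μ κ R cv K M m : ℝ) : ℝ :=
  (2 / cv + 1 / coefA μ κ cv K) * secC μ κ R cv K M m + 8 * enC μ κ R cv K M m
    + 2 / ptc μ κ K * secC μ κ R cv K M m

theorem enC_nonneg (hμ : 0 < μ) (hκ : 0 < κ) (hR : 0 < R) (hcv : 0 < cv) (hK : 0 < K) {M m : ℝ}
    (hm : 0 < m) : 0 ≤ enC μ κ R cv K M m := by
  unfold enC; positivity

theorem ptC_pos (hμ : 0 < μ) (hκ : 0 < κ) (hR : 0 < R) (hcv : 0 < cv) (hK : 0 < K) :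
    0 < ptC μ κ R cv K := by
  have := coefA_pos hμ hκ hcv hK
  unfold ptC; positivity

theorem ptc_pos (hμ : 0 < μ) (hκ : 0 < κ) (hK : 0 < K) : 0 < ptc μ κ K := by
  unfold ptc; positivity

theorem secC_nonneg (hμ : 0 < μ) (hκ : 0 < κ) (hR : 0 < R) (hcv : 0 < cv) (hK : 0 < K) {M m : ℝ}
    (hm : 0 < m) : 0 ≤ secC μ κ R cv K M m := by
  have := coefA_pos hμ hκ hcv hK
  have := ptC_pos hμ hκ hR hcv hK
  have := ptc_pos hμ hκ hK
  have := enC_nonneg hμ hκ hR hcv hK (M := M) hm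
  unfold secC del; positivity

theorem dens_phi (A x t : ℝ) : S.dens (phi K A S.hcv) x t =
    cv * ((S.θ x t - 1) ^ 4 / (S.θ x t + 1) ^ 2) + A * S.u x t ^ 4
      + S.u x t ^ 2 * (2 * ((S.θ x t - 1) ^ 4 / (S.θ x t + 1) ^ 3)) := by
  simp only [dens, phi]; ring

theorem dens_phi_zero {A M : ℝ} (hA : 0 < A) (hu : ∫ x, S.u x 0 ^ 2 ≤ M ^ 2)
    (hux : ∫ x, S.ux x 0 ^ 2 ≤ M ^ 2) (hθ : ∫ x, (S.θ x 0 - 1) ^ 2 ≤ M ^ 2) :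
    ∫ x, S.dens (phi K A S.hcv) x 0 ≤ (cv + 4 * M ^ 2) * M ^ 2 + A * (2 * M ^ 2) * M ^ 2 := by
  have hcv := S.hcv
  have i1 := (S.Lθ 0).integrable_sq.const_mul (cv + 4 * M ^ 2)
  have i2 := (S.Lu 0).integrable_sq.const_mul (A * (2 * M ^ 2))
  calc _ ≤ ∫ x, ((cv + 4 * M ^ 2) * (S.θ x 0 - 1) ^ 2 + A * (2 * M ^ 2) * S.u x 0 ^ 2) := by
        refine integral_mono (S.int_dens _ 0) (i1.fun_add i2) fun x => ?_
        have hu2 : S.u x 0 ^ 2 ≤ 2 * M ^ 2 := by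
          have := sq_le_add (fun x => S.du x 0) (S.Lu 0) (S.Lux 0) x
          linarith
        have hθ0 := S.θ_pos x 0
        have hr := ratio_sq hθ0
        have e1 : (S.θ x 0 - 1) ^ 4 / (S.θ x 0 + 1) ^ 2 ≤ (S.θ x 0 - 1) ^ 2 := by
          calc _ = ((S.θ x 0 - 1) / (S.θ x 0 + 1)) ^ 2 * (S.θ x 0 - 1) ^ 2 := by field_simp
            _ ≤ 1 * (S.θ x 0 - 1) ^ 2 := by gcongr
            _ = _ := one_mul _
        have e2 : (S.θ x 0 - 1) ^ 4 / (S.θ x 0 + 1) ^ 3 ≤ (S.θ x 0 - 1) ^ 2 := by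
          refine le_trans ?_ e1
          gcongr
          · linarith
          · norm_num
        have e3 : S.u x 0 ^ 4 ≤ 2 * M ^ 2 * S.u x 0 ^ 2 := by
          calc S.u x 0 ^ 4 = S.u x 0 ^ 2 * S.u x 0 ^ 2 := by ring
            _ ≤ _ := by gcongr
        have e4 : S.u x 0 ^ 2 * (2 * ((S.θ x 0 - 1) ^ 4 / (S.θ x 0 + 1) ^ 3)) ≤
          2 * M ^ 2 * (2 * (S.θ x 0 - 1) ^ 2) := by gcongr
        simp only [dens_phi]
        have e5 := mul_le_mul_of_nonneg_left e1 hcv.le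
        have e6 := mul_le_mul_of_nonneg_left e3 hA.le
        linarith
    _ = (cv + 4 * M ^ 2) * (∫ x, (S.θ x 0 - 1) ^ 2) + A * (2 * M ^ 2) * ∫ x, S.u x 0 ^ 2 := by
        rw [integral_add i1 i2, integral_const_mul, integral_const_mul]
    _ ≤ _ := by gcongr

/-- The second dissipation estimate. The basic energy estimate also recovers `(θ-1)²` from
`g²`, since `(θ-1)² ≤ 2 g² + 8 g`. -/
theorem second {M m : ℝ} (hm : 0 < m) (hu : ∫ x, S.u x 0 ^ 2 ≤ M ^ 2)
    (hux : ∫ x, S.ux x 0 ^ 2 ≤ M ^ 2)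
    (hv : ∫ x, (S.v x 0 - 1) ^ 2 ≤ M ^ 2) (hθ : ∫ x, (S.θ x 0 - 1) ^ 2 ≤ M ^ 2)
    (hθm : ∀ x, m ≤ S.θ x 0) :
    (∀ t ∈ Icc 0 T, ∫ x, ((S.θ x t - 1) ^ 2 + S.u x t ^ 4) ≤
      (2 / cv + 1 / coefA μ κ cv K) * secC μ κ R cv K M m + 8 * enC μ κ R cv K M m) ∧
    ∫ p, S.diss p.1 p.2 ∂slab T ≤ 2 / ptc μ κ K * secC μ κ R cv K M m := by
  have hμ := S.hμ
  have hκ := S.hκ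
  have hR := S.hR
  have hcv := S.hcv
  have hK := S.hK0
  obtain ⟨en1, en2, en3⟩ := S.energy hm hu hv hθ hθm
  have hsec := secC_nonneg hμ hκ hR hcv hK (M := M) hm
  have hE := enC_nonneg hμ hκ hR hcv hK (M := M) hm
  have hC := ptC_pos hμ hκ hR hcv hK
  have hc := ptc_pos hμ hκ hK
  have hA := coefA_pos hμ hκ hcv hK
  have hd0 := S.dens_phi_zero hA hu hux hθ
  set D := phi K (coefA μ κ cv K) S.hcv with hD
  set E := enC μ κ R cv K M m with hEd
  set C := ptC μ κ R cv K with hCd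
  set c := ptc μ κ K with hcd
  have hdel : 0 < del c C E := by unfold del; positivity
  have hctl : ∫ p, S.ctl p.1 p.2 ∂slab T ≤ 2 * E := by
    have : ∫ p, S.ctl p.1 p.2 ∂slab T = _ := integral_add S.int_uxθ S.int_θxθ
    rw [this]; linarith
  have main : ∀ t ∈ Icc 0 T, (∫ x, S.dens D x t) + c / 2 * ∫ p, S.diss p.1 p.2 ∂slab t
      ≤ secC μ κ R cv K M m := by
    intro t ht
    have hle : slab t ≤ slab T :=
      Measure.prod_mono le_rfl (Measure.restrict_mono_set _ (Ioc_subset_Ioc_right ht.2))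
    have ip := (S.int_prodn D).mono_measure hle
    have idd := S.int_diss.mono_measure hle
    have icc := S.int_ctl.mono_measure hle
    have hb := S.balance D ht.1 ht.2
    have hin : ∫ s in Ioc 0 t, ∫ x, S.prodn D x s ≤ ∫ s in Ioc 0 t,
        (-(c / 2 * ∫ x, S.diss x s)
          + (C + 9 * C * E ^ 2 / (4 * del c C E)) * ∫ x, S.ctl x s) := by
      refine integral_mono_ae ip.integral_prod_right
        ((idd.integral_prod_right.const_mul _).neg.add
          (icc.integral_prod_right.const_mul _)) ?_
      filter_upwards [ip.prod_left_ae, idd.prod_left_ae, icc.prod_left_ae,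
        ae_restrict_mem measurableSet_Ioc] with s j1 j2 j3 hs
      obtain ⟨b1, b2, b3⟩ := en1 s ⟨hs.1.le, hs.2.trans ht.2⟩
      exact S.space_bound hE b1 b2 b3 j1 j2 j3 hc hC rfl rfl
    have hsplit : ∫ s in Ioc 0 t, (-(c / 2 * ∫ x, S.diss x s)
          + (C + 9 * C * E ^ 2 / (4 * del c C E)) * ∫ x, S.ctl x s) =
        -(c / 2 * ∫ p, S.diss p.1 p.2 ∂slab t)
          + (C + 9 * C * E ^ 2 / (4 * del c C E)) * ∫ p, S.ctl p.1 p.2 ∂slab t := by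
      rw [integral_prod_symm _ idd, integral_prod_symm _ icc, ← integral_const_mul,
        ← integral_const_mul, ← integral_neg]
      exact integral_add (idd.integral_prod_right.const_mul _).neg
        (icc.integral_prod_right.const_mul _)
    have hmono : ∫ p, S.ctl p.1 p.2 ∂slab t ≤ 2 * E :=
      (integral_mono_measure hle (Eventually.of_forall fun p => S.ctl_nonneg p.1 p.2)
        S.int_ctl).trans hctl
    have hm2 : (C + 9 * C * E ^ 2 / (4 * del c C E)) * ∫ p, S.ctl p.1 p.2 ∂slab t ≤
      (C + 9 * C * E ^ 2 / (4 * del c C E)) * (2 * E) := by gcongr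
    have hs : secC μ κ R cv K M m = (cv + 4 * M ^ 2) * M ^ 2 + coefA μ κ cv K * (2 * M ^ 2) * M ^ 2
      + (C + 9 * C * E ^ 2 / (4 * del c C E)) * (2 * E) := rfl
    rw [hs]
    linarith
  have nd : ∀ t, 0 ≤ ∫ p, S.diss p.1 p.2 ∂slab t := fun t =>
    integral_nonneg fun p => S.diss_nonneg p.1 p.2
  have lowpt : ∀ x t, (S.θ x t - 1) ^ 2 + S.u x t ^ 4 ≤
      (2 / cv + 1 / coefA μ κ cv K) * S.dens D x t
        + 8 * ((S.θ x t - 1) ^ 2 / (S.θ x t + 1)) := by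
    intro x t
    rw [hD, dens_phi]
    have hθ := S.θ_pos x t
    generalize S.θ x t = y at *
    generalize S.u x t = u at *
    generalize coefA μ κ cv K = A at *
    have e1 : (y - 1) ^ 2 ≤ 2 * ((y - 1) ^ 4 / (y + 1) ^ 2) + 8 * ((y - 1) ^ 2 / (y + 1)) := by
      have e : y - 1 = (y - 1) ^ 2 / (y + 1) + 2 * ((y - 1) / (y + 1)) := by field_simp; ring
      have h2 : ((y - 1) / (y + 1)) ^ 2 ≤ (y - 1) ^ 2 / (y + 1) := by
        rw [div_pow]
        exact div_le_div_of_nonneg_left (sq_nonneg _) (by positivity) (by nlinarith)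
      have h3 : (y - 1) ^ 4 / (y + 1) ^ 2 = ((y - 1) ^ 2 / (y + 1)) ^ 2 := by field_simp
      rw [h3]
      have h4 : (y - 1) ^ 2 = ((y - 1) ^ 2 / (y + 1) + 2 * ((y - 1) / (y + 1))) ^ 2 := by rw [← e]
      nlinarith [sq_nonneg ((y - 1) ^ 2 / (y + 1) - 2 * ((y - 1) / (y + 1)))]
    have e2 : (2 / cv + 1 / A) * (cv * ((y - 1) ^ 4 / (y + 1) ^ 2) + A * u ^ 4
        + u ^ 2 * (2 * ((y - 1) ^ 4 / (y + 1) ^ 3))) =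
        2 * ((y - 1) ^ 4 / (y + 1) ^ 2) + u ^ 4
        + (1 / A * (cv * ((y - 1) ^ 4 / (y + 1) ^ 2)) + 2 / cv * (A * u ^ 4)
          + (2 / cv + 1 / A) * (u ^ 2 * (2 * ((y - 1) ^ 4 / (y + 1) ^ 3)))) := by
      field_simp; ring
    have e3 : 0 ≤ 1 / A * (cv * ((y - 1) ^ 4 / (y + 1) ^ 2)) + 2 / cv * (A * u ^ 4)
          + (2 / cv + 1 / A) * (u ^ 2 * (2 * ((y - 1) ^ 4 / (y + 1) ^ 3))) := by positivity
    rw [e2]; linarith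
  have nden : ∀ t, 0 ≤ ∫ x, S.dens D x t := fun t => integral_nonneg fun x => by
    have := S.θ_pos x t
    simp only [hD, dens_phi, Pi.zero_apply]; positivity
  refine ⟨fun t ht => ?_, ?_⟩
  · have i1 := (S.int_dens D t).const_mul (2 / cv + 1 / coefA μ κ cv K)
    have i2 := (S.int_g t).const_mul 8
    calc _ ≤ ∫ x, ((2 / cv + 1 / coefA μ κ cv K) * S.dens D x t
          + 8 * ((S.θ x t - 1) ^ 2 / (S.θ x t + 1))) :=
          integral_mono_of_nonneg (Eventually.of_forall fun x => by
            show (0 : ℝ) ≤ _; positivity) (i1.fun_add i2)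
            (Eventually.of_forall fun x => lowpt x t)
      _ = (2 / cv + 1 / coefA μ κ cv K) * (∫ x, S.dens D x t)
          + 8 * ∫ x, (S.θ x t - 1) ^ 2 / (S.θ x t + 1) := by
          rw [integral_add i1 i2, integral_const_mul, integral_const_mul]
      _ ≤ _ := by
          have := main t ht
          have := nd t
          have h1 : ∫ x, S.dens D x t ≤ secC μ κ R cv K M m := by nlinarith
          have h2 := (en1 t ht).2.2
          gcongr
  · have h1 := main T ⟨S.hT.le, le_rfl⟩
    have h2 := nden T
    have h3 : c / 2 * ∫ p, S.diss p.1 p.2 ∂slab T ≤ secC μ κ R cv K M m := by linarith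
    calc _ = 2 / c * (c / 2 * ∫ p, S.diss p.1 p.2 ∂slab T) := by field_simp
      _ ≤ _ := by gcongr

end Flow

/-! ### Classical solutions as flows on a time slab -/

/-- The projection of the time axis onto `[0, T]`. -/
noncomputable def clamp (T t : ℝ) : ℝ := max 0 (min t T)

theorem clamp_nonneg (T t : ℝ) : 0 ≤ clamp T t := le_max_left _ _

theorem clamp_le {T : ℝ} (hT : 0 < T) (t : ℝ) : clamp T t ≤ T := max_le hT.le (min_le_right _ _)

theorem clamp_eq {T t : ℝ} (ht : t ∈ Icc 0 T) : clamp T t = t := by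
  rw [clamp, min_eq_left ht.2, max_eq_right ht.1]

theorem continuous_clamp (T : ℝ) : Continuous (clamp T) := by
  unfold clamp; fun_prop

section field

variable {T : ℝ} {f : ℝ → ℝ → ℝ}

theorem field_d1 (hx : ∀ t, 0 ≤ t → ContDiff ℝ 2 (fun x => f x t)) (x t : ℝ) :
    HasDerivAt (fun y => f y (clamp T t)) (pdx f x (clamp T t)) x :=
  (((hx _ (clamp_nonneg T t)).differentiable (by norm_num)) x).hasDerivAt

theorem contDiff_pdx (hx : ∀ t, 0 ≤ t → ContDiff ℝ 2 (fun x => f x t)) {t : ℝ} (ht : 0 ≤ t) :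
    ContDiff ℝ 1 (fun x => pdx f x t) := by
  have h := hx t ht
  rw [show (2 : WithTop ℕ∞) = 1 + 1 by norm_num, contDiff_succ_iff_deriv] at h
  exact h.2.2

theorem field_d2 (hx : ∀ t, 0 ≤ t → ContDiff ℝ 2 (fun x => f x t)) (x t : ℝ) :
    HasDerivAt (fun y => pdx f y (clamp T t)) (pdx (pdx f) x (clamp T t)) x :=
  (((contDiff_pdx hx (clamp_nonneg T t)).differentiable (by norm_num)) x).hasDerivAt

theorem field_cont (ht : ∀ x t : ℝ, 0 ≤ t → DifferentiableAt ℝ (fun s => f x s) t) (x : ℝ) :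
    Continuous fun t => f x (clamp T t) :=
  continuous_iff_continuousAt.2 fun t => ContinuousAt.comp (f := clamp T) (g := fun s => f x s)
    (ht x _ (clamp_nonneg T t)).continuousAt (continuous_clamp T).continuousAt

theorem field_m0 (hx : ∀ t, 0 ≤ t → ContDiff ℝ 2 (fun x => f x t))
    (ht : ∀ x t : ℝ, 0 ≤ t → DifferentiableAt ℝ (fun s => f x s) t) :
    Measurable fun p : ℝ × ℝ => f p.1 (clamp T p.2) :=
  measurable_uncurry_of_continuous_of_measurable (u := fun x t => f x (clamp T t))
    (fun t => (hx _ (clamp_nonneg T t)).continuous) fun x => (field_cont ht x).measurable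

theorem field_m1 (hx : ∀ t, 0 ≤ t → ContDiff ℝ 2 (fun x => f x t))
    (ht : ∀ x t : ℝ, 0 ≤ t → DifferentiableAt ℝ (fun s => f x s) t) :
    Measurable fun p : ℝ × ℝ => pdx f p.1 (clamp T p.2) :=
  measurable_uncurry_of_continuous_of_measurable (u := fun x t => pdx f x (clamp T t))
    (fun t => (contDiff_pdx hx (clamp_nonneg T t)).continuous)
    (measurable_param_deriv (field_d1 hx) fun x => (field_cont ht x).measurable)

theorem field_m2 (hx : ∀ t, 0 ≤ t → ContDiff ℝ 2 (fun x => f x t))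
    (ht : ∀ x t : ℝ, 0 ≤ t → DifferentiableAt ℝ (fun s => f x s) t) :
    Measurable fun p : ℝ × ℝ => pdx (pdx f) p.1 (clamp T p.2) :=
  measurable_uncurry_of_continuous_of_measurable (u := fun x t => pdx (pdx f) x (clamp T t))
    (fun t => (contDiff_pdx hx (clamp_nonneg T t)).continuous_deriv (by norm_num))
    (measurable_param_deriv (field_d2 hx)
      (measurable_param_deriv (field_d1 hx) fun x => (field_cont ht x).measurable))

theorem field_dt (ht : ∀ x t : ℝ, 0 ≤ t → DifferentiableAt ℝ (fun s => f x s) t) (x : ℝ) {t : ℝ}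
    (h : t ∈ Ioo 0 T) : HasDerivAt (fun s => f x (clamp T s)) (pdt f x t) t := by
  refine (ht x t h.1.le).hasDerivAt.congr_of_eventuallyEq ?_
  filter_upwards [Ioo_mem_nhds h.1 h.2] with s hs
  rw [clamp_eq ⟨hs.1.le, hs.2.le⟩]

end field

theorem H1_sub_one (f : ℝ → ℝ) : H1 (fun x => f x - 1) = L2 (fun x => f x - 1) + L2 (deriv f) := by
  rw [H1, deriv_sub_const_fun]

theorem H2_sub_one (f : ℝ → ℝ) :
    H2 (fun x => f x - 1) = L2 (fun x => f x - 1) + L2 (deriv f) + L2 (deriv (deriv f)) := by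
  rw [H2, deriv_sub_const_fun]

theorem lintegral_sq_le {f : ℝ → ℝ} {B : ℝ} (h : L2 f ≤ ENNReal.ofReal B) :
    ∫⁻ x, ‖f x‖ₑ ^ 2 ≤ ENNReal.ofReal (max B 0 ^ 2) := by
  rw [← eLpNorm_two_sq, ENNReal.ofReal_pow (le_max_right _ _)]
  gcongr
  exact h.trans (ENNReal.ofReal_le_ofReal (le_max_left _ _))

/-- The six norms that make up the total `H¹` norm are each bounded by it. -/
theorem six_bounds {v u θ : ℝ → ℝ} {b : ENNReal}
    (h : H1 (fun x => v x - 1) + H1 u + H1 (fun x => θ x - 1) ≤ b) :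
    L2 (fun x => v x - 1) ≤ b ∧ L2 (deriv v) ≤ b ∧ L2 u ≤ b ∧ L2 (deriv u) ≤ b ∧
      L2 (fun x => θ x - 1) ≤ b ∧ L2 (deriv θ) ≤ b := by
  rw [H1_sub_one, H1_sub_one, H1] at h
  refine ⟨?_, ?_, ?_, ?_, ?_, ?_⟩
  · exact (le_self_add.trans (le_self_add.trans le_self_add)).trans h
  · exact (le_add_self.trans (le_self_add.trans le_self_add)).trans h
  · exact (le_self_add.trans (le_add_self.trans le_self_add)).trans h
  · exact (le_add_self.trans (le_add_self.trans le_self_add)).trans h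
  · exact (le_self_add.trans le_add_self).trans h
  · exact (le_add_self.trans le_add_self).trans h

section

variable {μ κ R cv K T : ℝ} {v u θ : ℝ → ℝ → ℝ}

theorem pdt_u_eq (hs : IsClassicalSolution μ κ R cv v u θ) (x : ℝ) {t : ℝ} (ht : 0 ≤ t) :
    pdt u x t = μ * (pdx (pdx u) x t / v x t - pdx u x t * pdx v x t / v x t ^ 2)
      - R * (pdx θ x t / v x t - θ x t * pdx v x t / v x t ^ 2) := by
  have hv := (hs.v_pos x t ht).ne'
  have dv := (((hs.smooth_x_v t ht).differentiable (by norm_num)) x).hasDerivAt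
  have dθ := (((hs.smooth_x_θ t ht).differentiable (by norm_num)) x).hasDerivAt
  have dux := (((contDiff_pdx hs.smooth_x_u ht).differentiable (by norm_num)) x).hasDerivAt
  have e1 : pdx (fun y s => R * θ y s / v y s) x t = _ := ((dθ.const_mul R).fun_div dv hv).deriv
  have e2 : pdx (fun y s => pdx u y s / v y s) x t = _ := (dux.fun_div dv hv).deriv
  have h := hs.eq_momentum x t ht
  rw [e1, e2] at h
  rw [← eq_sub_iff_add_eq] at h
  rw [h]
  simp only [pdx]
  field_simp

theorem pdt_θ_eq (hcv : 0 < cv) (hs : IsClassicalSolution μ κ R cv v u θ) (x : ℝ) {t : ℝ}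
    (ht : 0 ≤ t) :
    pdt θ x t = (κ * (pdx (pdx θ) x t / v x t - pdx θ x t * pdx v x t / v x t ^ 2)
      + μ * pdx u x t ^ 2 / v x t - R * θ x t / v x t * pdx u x t) / cv := by
  have hv := (hs.v_pos x t ht).ne'
  have dv := (((hs.smooth_x_v t ht).differentiable (by norm_num)) x).hasDerivAt
  have dθx := (((contDiff_pdx hs.smooth_x_θ ht).differentiable (by norm_num)) x).hasDerivAt
  have e2 : pdx (fun y s => pdx θ y s / v y s) x t = _ := (dθx.fun_div dv hv).deriv
  have h := hs.eq_energy x t ht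
  rw [e2, ← eq_sub_iff_add_eq] at h
  rw [eq_div_iff hcv.ne', mul_comm, h]
  simp only [pdx]
  field_simp

theorem lint_xx (hT : 0 < T) (hs : IsClassicalSolution μ κ R cv v u θ) :
    ∫⁻ t in Ioc 0 T, ∫⁻ x, ‖pdx (pdx u) x (clamp T t)‖ₑ ^ 2 < ⊤ ∧
    ∫⁻ t in Ioc 0 T, ∫⁻ x, ‖pdx (pdx θ) x (clamp T t)‖ₑ ^ 2 < ⊤ := by
  have h := hs.reg_H2 T hT
  rw [Measure.restrict_congr_set Ioc_ae_eq_Icc.symm] at h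
  constructor
  · refine lt_of_le_of_lt (setLIntegral_mono' measurableSet_Ioc fun t ht => ?_) h
    rw [clamp_eq ⟨ht.1.le, ht.2⟩, ← eLpNorm_two_sq]
    refine le_trans ?_ le_self_add
    gcongr
    exact le_add_self (a := L2 (deriv (deriv fun x => u x t)))
  · refine lt_of_le_of_lt (setLIntegral_mono' measurableSet_Ioc fun t ht => ?_) h
    rw [clamp_eq ⟨ht.1.le, ht.2⟩, ← eLpNorm_two_sq]
    refine le_trans ?_ le_add_self
    gcongr
    rw [H2_sub_one (fun x => θ x t)]
    exact le_add_self (a := L2 (deriv (deriv fun x => θ x t)))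

/-- A volume-bounded classical solution, stopped at time `T`. -/
theorem exists_flow (hμ : 0 < μ) (hκ : 0 < κ) (hR : 0 < R) (hcv : 0 < cv) (hK : 1 ≤ K)
    (hT : 0 < T) (hs : IsClassicalSolution μ κ R cv v u θ) (hb : VolBounded K v) :
    ∃ S : Flow μ κ R cv K T, (∀ x t, S.v x t = v x (clamp T t)) ∧
      (∀ x t, S.u x t = u x (clamp T t)) ∧ (∀ x t, S.θ x t = θ x (clamp T t)) ∧
      (∀ x t, S.ux x t = pdx u x (clamp T t)) ∧ (∀ x t, S.θx x t = pdx θ x (clamp T t)) := by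
  obtain ⟨B, hB⟩ := hs.reg_H1 T hT.le
  have hc : ∀ t, clamp T t ∈ Icc 0 T := fun t => ⟨clamp_nonneg T t, clamp_le hT t⟩
  have six := fun t => six_bounds (hB _ (hc t))
  refine ⟨{
    v := fun x t => v x (clamp T t)
    u := fun x t => u x (clamp T t)
    θ := fun x t => θ x (clamp T t)
    vx := fun x t => pdx v x (clamp T t)
    ux := fun x t => pdx u x (clamp T t)
    θx := fun x t => pdx θ x (clamp T t)
    uxx := fun x t => pdx (pdx u) x (clamp T t)
    θxx := fun x t => pdx (pdx θ) x (clamp T t)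
    hμ := hμ
    hκ := hκ
    hR := hR
    hcv := hcv
    hK := hK
    hT := hT
    v_lb := fun x t => (hb x _ (clamp_nonneg T t)).1
    v_ub := fun x t => (hb x _ (clamp_nonneg T t)).2
    θ_pos := fun x t => hs.θ_pos x _ (clamp_nonneg T t)
    dv := field_d1 hs.smooth_x_v
    du := field_d1 hs.smooth_x_u
    dθ := field_d1 hs.smooth_x_θ
    dux := field_d2 hs.smooth_x_u
    dθx := field_d2 hs.smooth_x_θ
    mv := field_m0 hs.smooth_x_v hs.smooth_t_v
    mu := field_m0 hs.smooth_x_u hs.smooth_t_u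
    mθ := field_m0 hs.smooth_x_θ hs.smooth_t_θ
    mvx := field_m1 hs.smooth_x_v hs.smooth_t_v
    mux := field_m1 hs.smooth_x_u hs.smooth_t_u
    mθx := field_m1 hs.smooth_x_θ hs.smooth_t_θ
    muxx := field_m2 hs.smooth_x_u hs.smooth_t_u
    mθxx := field_m2 hs.smooth_x_θ hs.smooth_t_θ
    cv_t := field_cont hs.smooth_t_v
    cu_t := field_cont hs.smooth_t_u
    cθ_t := field_cont hs.smooth_t_θ
    dv_t := fun x t ht => by
      rw [clamp_eq ⟨ht.1.le, ht.2.le⟩, ← hs.eq_mass x t ht.1.le]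
      exact field_dt hs.smooth_t_v x ht
    du_t := fun x t ht => by
      rw [clamp_eq ⟨ht.1.le, ht.2.le⟩, ← pdt_u_eq hs x ht.1.le]
      exact field_dt hs.smooth_t_u x ht
    dθ_t := fun x t ht => by
      rw [clamp_eq ⟨ht.1.le, ht.2.le⟩, ← pdt_θ_eq hcv hs x ht.1.le]
      exact field_dt hs.smooth_t_θ x ht
    B := max B 0 ^ 2
    L2v := fun t => lintegral_sq_le (six t).1
    L2vx := fun t => lintegral_sq_le (six t).2.1
    L2u := fun t => lintegral_sq_le (six t).2.2.1
    L2ux := fun t => lintegral_sq_le (six t).2.2.2.1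
    L2θ := fun t => lintegral_sq_le (six t).2.2.2.2.1
    L2θx := fun t => lintegral_sq_le (six t).2.2.2.2.2
    L2uxx := (lint_xx hT hs).1
    L2θxx := (lint_xx hT hs).2 }, ?_, ?_, ?_, ?_, ?_⟩ <;> exact fun _ _ => rfl

end

theorem Flow.int_state {μ κ R cv K T : ℝ} (S : Flow μ κ R cv K T) (t : ℝ) :
    Integrable fun x => (S.θ x t - 1) ^ 2 + S.u x t ^ 4 := by
  refine (S.Lθ t).integrable_sq.fun_add ?_
  obtain ⟨c, hc⟩ := S.bu.2
  refine ((S.Lu t).integrable_sq.bdd_mul (c := c ^ 2) (f := fun x => S.u x t ^ 2)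
    (((S.Lu t).1).pow 2) (Eventually.of_forall fun x => ?_)).congr
    (Eventually.of_forall fun x => by show _ * _ = _; ring)
  rw [norm_pow]
  exact pow_le_pow_left₀ (norm_nonneg _) (hc (x, t)) 2

namespace Flow

/-- The dissipation estimate with an explicit constant. -/
theorem dissipation_bound {μ κ R cv M m K T : ℝ} {v u θ : ℝ → ℝ → ℝ} (hμ : 0 < μ) (hκ : 0 < κ)
    (hR : 0 < R) (hcv : 0 < cv) (hM : 0 < M) (hm : 0 < m) (hK : 1 ≤ K)
    (hs : IsClassicalSolution μ κ R cv v u θ) (hi : InitBounded M m v u θ) (hb : VolBounded K v)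
    (hT : 0 < T) :
    (⨆ t ∈ Icc (0 : ℝ) T, ∫⁻ x : ℝ, ENNReal.ofReal ((θ x t - 1) ^ 2 + u x t ^ 4))
      + (∫⁻ t in Icc (0 : ℝ) T, ∫⁻ x : ℝ, ENNReal.ofReal
          ((1 + θ x t + u x t ^ 2) * pdx u x t ^ 2 + pdx θ x t ^ 2))
      ≤ ENNReal.ofReal (finC μ κ R cv K M m) := by
  have hK0 : 0 < K := lt_of_lt_of_le one_pos hK
  have hsec := secC_nonneg hμ hκ hR hcv hK0 (M := M) hm
  have hE := enC_nonneg hμ hκ hR hcv hK0 (M := M) hm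
  have hc := ptc_pos hμ hκ hK0
  have hA := coefA_pos hμ hκ hcv hK0
  have p1 : 0 ≤ (2 / cv + 1 / coefA μ κ cv K) * secC μ κ R cv K M m
    + 8 * enC μ κ R cv K M m := by positivity
  have p2 : 0 ≤ 2 / ptc μ κ K * secC μ κ R cv K M m := by positivity
  obtain ⟨S, ev, eu, eθ, eux, eθx⟩ := exists_flow hμ hκ hR hcv hK hT hs hb
  have c0 : clamp T 0 = 0 := clamp_eq ⟨le_rfl, hT.le⟩
  obtain ⟨hi1, -, hiθ⟩ := hi
  obtain ⟨b1, -, b3, b4, b5, -⟩ := six_bounds hi1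
  have key := S.second (M := M) hm
    (integral_sq_le_of_eLpNorm (S.Lu 0) hM.le (by simp only [eu, c0]; exact b3))
    (integral_sq_le_of_eLpNorm (S.Lux 0) hM.le (by simp only [eux, c0]; exact b4))
    (integral_sq_le_of_eLpNorm (S.Lv 0) hM.le (by simp only [ev, c0]; exact b1))
    (integral_sq_le_of_eLpNorm (S.Lθ 0) hM.le (by simp only [eθ, c0]; exact b5))
    (fun x => by rw [eθ, c0]; exact hiθ x)
  obtain ⟨k1, k2⟩ := key
  have q1 : (⨆ t ∈ Icc (0 : ℝ) T, ∫⁻ x : ℝ, ENNReal.ofReal ((θ x t - 1) ^ 2 + u x t ^ 4)) ≤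
      ENNReal.ofReal ((2 / cv + 1 / coefA μ κ cv K) * secC μ κ R cv K M m
        + 8 * enC μ κ R cv K M m) := by
    refine iSup₂_le fun t ht => ?_
    refine le_trans (le_of_eq ?_) (ENNReal.ofReal_le_ofReal (k1 t ht))
    rw [ofReal_integral_eq_lintegral_ofReal (S.int_state t)
      (Eventually.of_forall fun x => by show (0 : ℝ) ≤ _; positivity)]
    simp only [eu, eθ, clamp_eq ht]
  have q2 : (∫⁻ t in Icc (0 : ℝ) T, ∫⁻ x : ℝ, ENNReal.ofReal
      ((1 + θ x t + u x t ^ 2) * pdx u x t ^ 2 + pdx θ x t ^ 2)) ≤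
      ENNReal.ofReal (2 / ptc μ κ K * secC μ κ R cv K M m) := by
    refine le_trans (le_of_eq ?_) (ENNReal.ofReal_le_ofReal k2)
    rw [ofReal_integral_eq_lintegral_ofReal S.int_diss
      (Eventually.of_forall fun p => S.diss_nonneg p.1 p.2),
      lintegral_prod_symm _ S.int_diss.1.aemeasurable.ennreal_ofReal,
      ← Measure.restrict_congr_set Ioc_ae_eq_Icc]
    refine setLIntegral_congr_fun measurableSet_Ioc fun t ht => ?_
    simp only [Flow.diss, eu, eθ, eux, eθx, clamp_eq (Ioc_subset_Icc_self ht)]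
  refine (add_le_add q1 q2).trans ?_
  rw [← ENNReal.ofReal_add p1 p2, finC]

theorem finC_nonneg {μ κ R cv K M m : ℝ} (hμ : 0 < μ) (hκ : 0 < κ) (hR : 0 < R) (hcv : 0 < cv)
    (hK0 : 0 < K) (hm : 0 < m) : 0 ≤ finC μ κ R cv K M m := by
  have hsec := secC_nonneg hμ hκ hR hcv hK0 (M := M) hm
  have hE := enC_nonneg hμ hκ hR hcv hK0 (M := M) hm
  have hc := ptc_pos hμ hκ hK0
  have hA := coefA_pos hμ hκ hcv hK0
  unfold finC; positivity

end Flow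

end NSE

/-- key dissipation estimate. -/
theorem key_dissipation_estimate
    (μ κ R cv M m K : ℝ) (hμ : 0 < μ) (hκ : 0 < κ) (hR : 0 < R) (hcv : 0 < cv)
    (hM : 0 < M) (hm : 0 < m) (hK : 1 ≤ K) :
    ∃ C : ℝ, 0 < C ∧
      ∀ v u θ : ℝ → ℝ → ℝ,
        IsClassicalSolution μ κ R cv v u θ →
        InitBounded M m v u θ →
        VolBounded K v →
        ∀ T : ℝ, 0 < T →
          (⨆ t ∈ Icc (0 : ℝ) T,
              ∫⁻ x : ℝ, ENNReal.ofReal ((θ x t - 1) ^ 2 + u x t ^ 4))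
            + (∫⁻ t in Icc (0 : ℝ) T, ∫⁻ x : ℝ,
                ENNReal.ofReal ((1 + θ x t + u x t ^ 2) * pdx u x t ^ 2
                  + pdx θ x t ^ 2))
          ≤ ENNReal.ofReal C := by
  have hK0 : 0 < K := lt_of_lt_of_le one_pos hK
  have h0 := NSE.Flow.finC_nonneg hμ hκ hR hcv hK0 (M := M) hm
  refine ⟨NSE.Flow.finC μ κ R cv K M m + 1, by linarith, ?_⟩
  intro v u θ hs hi hb T hT
  exact (NSE.Flow.dissipation_bound hμ hκ hR hcv hM hm hK hs hi hb hT).trans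
    (ENNReal.ofReal_le_ofReal (by linarith))
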